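/- arXiv:2302.10118 — 9 statements merged into one kernel-verified Lean document; each statement's English description precedes it below -/
import Mathlib

section
/- Each of the n(n−1) defining inequalities of the symplectic FFLV degree cone K_{2n} defines a facet of K_{2n}: for each chosen defining inequality among (A_i) (1 ≤ i ≤ n−1), (B_{i,j}) (1 ≤ i < j ≤ n−1), (C_{i,j}) (1 ≤ i < j ≤ n−1), (D_i) (1 ≤ i ≤ n−1), there exists a point d ∈ K_{2n} which satisfies the chosen inequality with equality and all of the other defining inequalities strictly; in particular the defining inequalities form the complete, irredundant set of facets of K_{2n}. -/
/-- Index of a positive root of `sp_{2n}`: `(i, j, false)` encodes `α_{i,j}` with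
`1 ≤ i ≤ j ≤ n`, and `(i, j, true)` encodes `α_{i,j̄}` with `1 ≤ i ≤ j ≤ n-1`. -/
def IsSpRootIdx (n : ℕ) (t : ℕ × ℕ × Bool) : Prop :=
  1 ≤ t.1 ∧ t.1 ≤ t.2.1 ∧ t.2.1 ≤ n ∧ (t.2.2 = true → t.2.1 + 1 ≤ n)

instance (n : ℕ) (t : ℕ × ℕ × Bool) : Decidable (IsSpRootIdx n t) :=
  inferInstanceAs (Decidable (1 ≤ t.1 ∧ t.1 ≤ t.2.1 ∧ t.2.1 ≤ n ∧ (t.2.2 = true → t.2.1 + 1 ≤ n)))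

/-- The set `Φ⁺` of positive roots of `sp_{2n}`. -/
def SpRoot (n : ℕ) : Type := {t : ℕ × ℕ × Bool // IsSpRootIdx n t}

/-- Normalised root index, implementing the convention `α_{i,n̄} := α_{i,n}`. -/
def rIdx (n i j : ℕ) (b : Bool) : ℕ × ℕ × Bool :=
  if b = true ∧ j = n then (i, j, false) else (i, j, b)
/-- Evaluate `d ∈ ℝ^{Φ⁺}` on a root index (value `0` outside `Φ⁺`). -/
noncomputable def dval {n : ℕ} (d : SpRoot n → ℝ) (t : ℕ × ℕ × Bool) : ℝ :=
  if h : IsSpRootIdx n t then d ⟨t, h⟩ else 0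

/-- `d_{i,j}`. -/
noncomputable def dA {n : ℕ} (d : SpRoot n → ℝ) (i j : ℕ) : ℝ := dval d (i, j, false)

/-- `d_{i,j̄}`, with the convention `d_{i,n̄} = d_{i,n}`. -/
noncomputable def dB {n : ℕ} (d : SpRoot n → ℝ) (i j : ℕ) : ℝ := dval d (rIdx n i j true)
inductive FacetKind
  | A | B | C | D
  deriving DecidableEq

/-- Labels of the `n(n-1)` defining inequalities (facets) of `K_{2n}`. -/
def Facets (n : ℕ) : Set (FacetKind × ℕ × ℕ) :=
  {f | (f.1 = FacetKind.A ∧ 1 ≤ f.2.1 ∧ f.2.1 + 1 ≤ n ∧ f.2.2 = f.2.1 + 1) ∨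
       (f.1 = FacetKind.B ∧ 1 ≤ f.2.1 ∧ f.2.1 < f.2.2 ∧ f.2.2 + 1 ≤ n) ∨
       (f.1 = FacetKind.C ∧ 1 ≤ f.2.1 ∧ f.2.1 < f.2.2 ∧ f.2.2 + 1 ≤ n) ∨
       (f.1 = FacetKind.D ∧ 1 ≤ f.2.1 ∧ f.2.1 + 1 ≤ n ∧ f.2.2 = f.2.1 + 1)}

/-- Left-hand side of the defining inequality with a given label. -/
noncomputable def facetLhs {n : ℕ} (d : SpRoot n → ℝ) : FacetKind × ℕ × ℕ → ℝ
  | (FacetKind.A, i, _) => dA d i i + dA d (i+1) (i+1)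
  | (FacetKind.B, i, j) => dA d i j + dA d (i+1) (j+1)
  | (FacetKind.C, i, j) => dB d i (j+1) + dB d (i+1) j
  | (FacetKind.D, i, _) => 2 * dB d i (i+1)

/-- Right-hand side of the defining inequality with a given label. -/
noncomputable def facetRhs {n : ℕ} (d : SpRoot n → ℝ) : FacetKind × ℕ × ℕ → ℝ
  | (FacetKind.A, i, _) => dA d i (i+1)
  | (FacetKind.B, i, j) => dA d i (j+1) + dA d (i+1) j
  | (FacetKind.C, i, j) => dB d i j + dB d (i+1) (j+1)
  | (FacetKind.D, i, _) => dB d i i + dB d (i+1) (i+1)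

/-- The symplectic FFLV degree cone `K_{2n} ⊆ ℝ^{Φ⁺}`. -/
def Kcone (n : ℕ) : Set (SpRoot n → ℝ) :=
  {d | ∀ f ∈ Facets n, facetRhs d f ≤ facetLhs d f}

/-- Points of `ℝ^{Φ⁺}` satisfying every defining inequality of `K_{2n}` strictly. -/
def KconeStrict (n : ℕ) : Set (SpRoot n → ℝ) :=
  {d | ∀ f ∈ Facets n, facetRhs d f < facetLhs d f}

/-- Point of `ℝ^{Φ⁺}` with unbarred entries `F` and barred entries `G`. -/
def mkPt (n : ℕ) (F G : ℕ → ℕ → ℝ) : SpRoot n → ℝ :=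
  fun t => if t.1.2.2 = true then G t.1.1 t.1.2.1 else F t.1.1 t.1.2.1

lemma dA_mkPt (n : ℕ) (F G : ℕ → ℕ → ℝ) (i j : ℕ) (h1 : 1 ≤ i) (h2 : i ≤ j) (h3 : j ≤ n) :
    dA (mkPt n F G) i j = F i j := by
  have h : IsSpRootIdx n (i, j, false) := ⟨h1, h2, h3, by simp⟩
  simp [dA, dval, h, mkPt]

lemma dB_mkPt (n : ℕ) (F G : ℕ → ℕ → ℝ) (hFG : ∀ i, F i n = G i n)
    (i j : ℕ) (h1 : 1 ≤ i) (h2 : i ≤ j) (h3 : j ≤ n) :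
    dB (mkPt n F G) i j = G i j := by
  by_cases hj : j = n
  · subst hj
    have h : IsSpRootIdx j (i, j, false) := ⟨h1, h2, h3, by simp⟩
    simp [dB, rIdx, dval, h, mkPt, hFG]
  · have h : IsSpRootIdx n (i, j, true) := ⟨h1, h2, h3, fun _ => by simp only; omega⟩
    simp [dB, rIdx, hj, dval, h, mkPt]

/-- Reduction: it suffices that the slack of `mkPt` is zero at `f` and positive elsewhere. -/
lemma reduce (n : ℕ) (F G : ℕ → ℕ → ℝ) (hFG : ∀ i, F i n = G i n)
    (f : FacetKind × ℕ × ℕ) (hf : f ∈ Facets n)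
    (P : FacetKind × ℕ × ℕ → ℝ → Prop)
    (hP : ∀ g s, P g s → (g = f → s = 0) ∧ (g ≠ f → 0 < s))
    (hA : ∀ i, 1 ≤ i → i + 1 ≤ n →
      P (FacetKind.A, i, i+1) (F i i + F (i+1) (i+1) - F i (i+1)))
    (hB : ∀ i j, 1 ≤ i → i < j → j + 1 ≤ n →
      P (FacetKind.B, i, j) (F i j + F (i+1) (j+1) - (F i (j+1) + F (i+1) j)))
    (hC : ∀ i j, 1 ≤ i → i < j → j + 1 ≤ n →
      P (FacetKind.C, i, j) (G i (j+1) + G (i+1) j - (G i j + G (i+1) (j+1))))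
    (hD : ∀ i, 1 ≤ i → i + 1 ≤ n →
      P (FacetKind.D, i, i+1) (2 * G i (i+1) - (G i i + G (i+1) (i+1)))) :
    ∃ d ∈ Kcone n, facetLhs d f = facetRhs d f ∧
      ∀ g ∈ Facets n, g ≠ f → facetRhs d g < facetLhs d g := by
  have key : ∀ g ∈ Facets n,
      P g (facetLhs (mkPt n F G) g - facetRhs (mkPt n F G) g) := by
    rintro ⟨k, i, j⟩ hg
    simp only [Facets, Set.mem_setOf_eq] at hg
    rcases hg with ⟨rfl, h1, h2, rfl⟩ | ⟨rfl, h1, h2, h3⟩ | ⟨rfl, h1, h2, h3⟩ | ⟨rfl, h1, h2, rfl⟩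
    · simp only [facetLhs, facetRhs]
      rw [dA_mkPt, dA_mkPt, dA_mkPt] <;> first | exact hA i h1 h2 | omega
    · simp only [facetLhs, facetRhs]
      rw [dA_mkPt, dA_mkPt, dA_mkPt, dA_mkPt] <;> first | exact hB i j h1 h2 h3 | omega
    · simp only [facetLhs, facetRhs]
      rw [dB_mkPt n F G hFG, dB_mkPt n F G hFG, dB_mkPt n F G hFG, dB_mkPt n F G hFG] <;>
        first | exact hC i j h1 h2 h3 | omega
    · simp only [facetLhs, facetRhs]
      rw [dB_mkPt n F G hFG, dB_mkPt n F G hFG, dB_mkPt n F G hFG] <;>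
        first | exact hD i h1 h2 | omega
  have hlt : ∀ g ∈ Facets n, g ≠ f →
      facetRhs (mkPt n F G) g < facetLhs (mkPt n F G) g := fun g hg hne =>
    sub_pos.mp ((hP g _ (key g hg)).2 hne)
  have heq : facetLhs (mkPt n F G) f = facetRhs (mkPt n F G) f :=
    sub_eq_zero.mp ((hP f _ (key f hf)).1 rfl)
  refine ⟨mkPt n F G, fun g hg => ?_, heq, hlt⟩
  by_cases h : g = f
  · rw [h, heq]
  · exact (hlt g hg h).le

/-- Each of the `n(n-1)` defining inequalities of `K_{2n}` defines a facet:
for each defining inequality there is a point of `K_{2n}` satisfying it with equality and all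
other defining inequalities strictly; in particular the defining inequalities form the complete
irredundant set of facets of `K_{2n}`. -/
theorem spFFLV_cone_facets (n : ℕ) (hn : 2 ≤ n) :
    ∀ f ∈ Facets n, ∃ d ∈ Kcone n,
      facetLhs d f = facetRhs d f ∧
      ∀ g ∈ Facets n, g ≠ f → facetRhs d g < facetLhs d g := by
  intro f hf
  have hf0 := hf
  obtain ⟨k, a, b⟩ := f
  simp only [Facets, Set.mem_ofPred_eq] at hf
  rcases hf with ⟨rfl, h1, h2, rfl⟩ | ⟨rfl, h1, h2, h3⟩ | ⟨rfl, h1, h2, h3⟩ | ⟨rfl, h1, h2, rfl⟩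
  · -- type A
    refine reduce n (fun i j => (i * j : ℝ) - (if j = a then (a * a + a + 1 : ℝ) else 0))
      (fun i j => (i * (2 * n - j) : ℝ) - 2 * n * (n - j) - 0)
      ?_ _ hf0 (fun g s => (g = _ → s = 0) ∧ (g ≠ _ → 0 < s)) (fun _ _ h => h) ?_ ?_ ?_ ?_
    · intro i
      try split_ifs
      all_goals first | omega | ring1
    all_goals
      intros
      simp only [ne_eq, Prod.mk.injEq, reduceCtorEq, false_and, true_and, not_false_eq_true,
        IsEmpty.forall_iff, forall_const]
      push_cast
      first
      | nlinarith
      | (split_ifs <;> first | omega | (exfalso; omega) | nlinarith)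
      | (constructor <;> intros <;> split_ifs <;>
          first | omega | (exfalso; omega) | (subst_vars; ring1) | (simp_all; done) | nlinarith)
  · -- type B
    refine reduce n (fun i j => (i * j : ℝ) - ((if i ≤ a ∧ j ≤ b then (1 : ℝ) else 0) - if j < a then (1 : ℝ) else 0))
      (fun i j => (i * (2 * n - j) : ℝ) - 2 * n * (n - j) - 0)
      ?_ _ hf0 (fun g s => (g = _ → s = 0) ∧ (g ≠ _ → 0 < s)) (fun _ _ h => h) ?_ ?_ ?_ ?_
    · intro i
      try split_ifs
      all_goals first | omega | ring1
    all_goals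
      intros
      simp only [ne_eq, Prod.mk.injEq, reduceCtorEq, false_and, true_and, not_false_eq_true,
        IsEmpty.forall_iff, forall_const]
      push_cast
      first
      | nlinarith
      | (split_ifs <;> first | omega | (exfalso; omega) | nlinarith)
      | (constructor <;> intros <;> split_ifs <;>
          first | omega | (exfalso; omega) | (subst_vars; ring1) | (simp_all; done) | nlinarith)
  · -- type C
    refine reduce n (fun i j => (i * j : ℝ) - ((if i ≤ a then (1 : ℝ) else 0) - if j < a then (1 : ℝ) else 0))
      (fun i j => (i * (2 * n - j) : ℝ) - 2 * n * (n - j) - (if i ≤ a ∧ b + 1 ≤ j then (1 : ℝ) else 0))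
      ?_ _ hf0 (fun g s => (g = _ → s = 0) ∧ (g ≠ _ → 0 < s)) (fun _ _ h => h) ?_ ?_ ?_ ?_
    · intro i
      try split_ifs
      all_goals first | omega | ring1
    all_goals
      intros
      simp only [ne_eq, Prod.mk.injEq, reduceCtorEq, false_and, true_and, not_false_eq_true,
        IsEmpty.forall_iff, forall_const]
      push_cast
      first
      | nlinarith
      | (split_ifs <;> first | omega | (exfalso; omega) | nlinarith)
      | (constructor <;> intros <;> split_ifs <;>
          first | omega | (exfalso; omega) | (subst_vars; ring1) | (simp_all; done) | nlinarith)
  · -- type D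
    refine reduce n (fun i j => (i * j : ℝ) - 0)
      (fun i j => (i * (2 * n - j) : ℝ) - 2 * n * (n - j) - (- if j ≤ a then (1 : ℝ) else 0))
      ?_ _ hf0 (fun g s => (g = _ → s = 0) ∧ (g ≠ _ → 0 < s)) (fun _ _ h => h) ?_ ?_ ?_ ?_
    · intro i
      try split_ifs
      all_goals first | omega | ring1
    all_goals
      intros
      simp only [ne_eq, Prod.mk.injEq, reduceCtorEq, false_and, true_and, not_false_eq_true,
        IsEmpty.forall_iff, forall_const]
      push_cast
      first
      | nlinarith
      | (split_ifs <;> first | omega | (exfalso; omega) | nlinarith)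
      | (constructor <;> intros <;> split_ifs <;>
          first | omega | (exfalso; omega) | (subst_vars; ring1) | (simp_all; done) | nlinarith)
end

section
/- The lineality space of the symplectic FFLV degree cone K_{2n} equals L′: a point d ∈ ℝ^{Φ⁺} satisfies both d ∈ K_{2n} and −d ∈ K_{2n} if and only if d ∈ L′; moreover the subspace L′ has dimension n. -/
/-- The linear subspace `L′ ⊆ ℝ^{Φ⁺}` from the paper: `d_{i,j} = d_{i,i} + ⋯ + d_{j,j}` and
`d_{i,j̄} = (d_{i,i} + ⋯ + d_{n,n}) + (d_{n-1,n-1} + ⋯ + d_{j,j})`. -/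
def Lset (n : ℕ) : Set (SpRoot n → ℝ) :=
  {d | (∀ i j : ℕ, 1 ≤ i → i < j → j ≤ n →
          dA d i j = ∑ k ∈ Finset.Icc i j, dA d k k) ∧
       (∀ i j : ℕ, 1 ≤ i → i ≤ j → j + 1 ≤ n →
          dB d i j = (∑ k ∈ Finset.Icc i n, dA d k k) + ∑ k ∈ Finset.Icc j (n-1), dA d k k)}


theorem dval_add' {n : ℕ} (a b : SpRoot n → ℝ) (t) : dval (a + b) t = dval a t + dval b t := by
  unfold dval; split
  · rfl
  · exact (add_zero 0).symm

theorem dval_smul' {n : ℕ} (c : ℝ) (b : SpRoot n → ℝ) (t) : dval (c • b) t = c * dval b t := by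
  unfold dval; split
  · rfl
  · exact (mul_zero c).symm

theorem dval_neg' {n : ℕ} (b : SpRoot n → ℝ) (t) : dval (-b) t = - dval b t := by
  unfold dval; split
  · rfl
  · exact neg_zero.symm

theorem dB_top {n : ℕ} (d : SpRoot n → ℝ) (i : ℕ) : dB d i n = dA d i n := by
  simp [dA, dB, rIdx]

theorem sum_Icc_partial (f : ℕ → ℝ) (i j : ℕ) (h : i ≤ j + 1) :
    ∑ k ∈ Finset.Icc i j, f k = ∑ k ∈ Finset.range (j + 1), f k - ∑ k ∈ Finset.range i, f k := by
  rw [← Finset.sum_Ico_eq_sub f h]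
  rfl

/-- Diagonal partial sums. -/
noncomputable def diagSum {n : ℕ} (d : SpRoot n → ℝ) (i : ℕ) : ℝ :=
  ∑ k ∈ Finset.range i, dA d k k

theorem diagSum_succ {n : ℕ} (d : SpRoot n → ℝ) (i : ℕ) :
    diagSum d (i + 1) = diagSum d i + dA d i i := Finset.sum_range_succ _ _

/-- `L′` through partial sums. -/
theorem mem_Lset_iff {n : ℕ} (hn : 2 ≤ n) (d : SpRoot n → ℝ) : d ∈ Lset n ↔
    (∀ i j : ℕ, 1 ≤ i → i ≤ j → j ≤ n → dA d i j = diagSum d (j + 1) - diagSum d i) ∧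
    (∀ i j : ℕ, 1 ≤ i → i ≤ j → j ≤ n →
      dB d i j = diagSum d (n + 1) - diagSum d i + (diagSum d n - diagSum d j)) := by
  obtain ⟨m, rfl⟩ : ∃ m, n = m + 1 := ⟨n - 1, by omega⟩
  constructor
  · rintro ⟨h1, h2⟩
    have h1' : ∀ i j : ℕ, 1 ≤ i → i ≤ j → j ≤ m + 1 →
        dA d i j = diagSum d (j + 1) - diagSum d i := by
      intro i j hi hij hj
      rcases hij.eq_or_lt with rfl | hlt
      · rw [diagSum_succ]; ring
      · rw [h1 i j hi hlt hj, sum_Icc_partial _ _ _ (by omega)]; rfl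
    refine ⟨h1', ?_⟩
    intro i j hi hij hj
    rcases hj.eq_or_lt with rfl | hlt
    · rw [dB_top, h1' _ _ hi hij le_rfl]; ring
    · rw [h2 i j hi hij (by omega), sum_Icc_partial _ _ _ (by omega),
        sum_Icc_partial _ _ _ (by omega)]; rfl
  · rintro ⟨h1, h2⟩
    refine ⟨?_, ?_⟩
    · intro i j hi hij hj
      rw [h1 i j hi hij.le hj, sum_Icc_partial _ _ _ (by omega)]; rfl
    · intro i j hi hij hj
      rw [h2 i j hi hij (by omega), sum_Icc_partial _ _ _ (by omega),
        sum_Icc_partial _ _ _ (by omega)]; rfl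

theorem lineality_eq_iff {n : ℕ} (d : SpRoot n → ℝ) :
    (d ∈ Kcone n ∧ -d ∈ Kcone n) ↔ ∀ f ∈ Facets n, facetRhs d f = facetLhs d f := by
  have hL : ∀ f, facetLhs (-d) f = - facetLhs d f := by
    rintro ⟨_ | _ | _ | _, i, j⟩ <;> simp only [facetLhs, dA, dB, dval_neg'] <;> ring
  have hR : ∀ f, facetRhs (-d) f = - facetRhs d f := by
    rintro ⟨_ | _ | _ | _, i, j⟩ <;> simp only [facetRhs, dA, dB, dval_neg'] <;> ring
  constructor
  · rintro ⟨h1, h2⟩ f hf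
    have a := h1 f hf
    have b := h2 f hf
    rw [hL, hR] at b
    linarith
  · intro h
    refine ⟨fun f hf => (h f hf).le, fun f hf => ?_⟩
    rw [hL, hR, h f hf]

theorem facets_eq_iff {n : ℕ} (hn : 2 ≤ n) (d : SpRoot n → ℝ) :
    (∀ f ∈ Facets n, facetRhs d f = facetLhs d f) ↔ d ∈ Lset n := by
  rw [mem_Lset_iff hn]
  constructor
  · intro h
    have hA : ∀ i, 1 ≤ i → i + 1 ≤ n → dA d i (i+1) = dA d i i + dA d (i+1) (i+1) :=
      fun i h1 h2 => h (FacetKind.A, i, i+1) (by simp [Facets]; omega)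
    have hB : ∀ i j, 1 ≤ i → i < j → j + 1 ≤ n →
        dA d i (j+1) + dA d (i+1) j = dA d i j + dA d (i+1) (j+1) :=
      fun i j h1 h2 h3 => h (FacetKind.B, i, j) (by simp [Facets]; omega)
    have hC : ∀ i j, 1 ≤ i → i < j → j + 1 ≤ n →
        dB d i j + dB d (i+1) (j+1) = dB d i (j+1) + dB d (i+1) j :=
      fun i j h1 h2 h3 => h (FacetKind.C, i, j) (by simp [Facets]; omega)
    have hD : ∀ i, 1 ≤ i → i + 1 ≤ n →
        dB d i i + dB d (i+1) (i+1) = 2 * dB d i (i+1) :=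
      fun i h1 h2 => h (FacetKind.D, i, i+1) (by simp [Facets]; omega)
    have key : ∀ m i j : ℕ, j - i = m → 1 ≤ i → i ≤ j → j ≤ n →
        dA d i j = diagSum d (j + 1) - diagSum d i := by
      intro m
      induction m using Nat.strong_induction_on with
      | _ m ih =>
        intro i j hm hi hij hj
        rcases hij.eq_or_lt with rfl | hlt
        · rw [diagSum_succ]; ring
        · obtain ⟨j, rfl⟩ : ∃ k, j = k + 1 := ⟨j - 1, by omega⟩
          rcases (show i ≤ j by omega).eq_or_lt with rfl | hlt'
          · rw [hA i hi hj, diagSum_succ, diagSum_succ]; ring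
          · have e := hB i j hi hlt' hj
            have e1 := ih _ (by omega) i j rfl hi (by omega) (by omega)
            have e2 := ih _ (by omega) (i+1) (j+1) rfl (by omega) (by omega) (by omega)
            have e3 := ih _ (by omega) (i+1) j rfl (by omega) (by omega) (by omega)
            linarith
    have keyB : ∀ m i j : ℕ, (n - i) + (n - j) = m → 1 ≤ i → i ≤ j → j ≤ n →
        dB d i j = diagSum d (n + 1) - diagSum d i + (diagSum d n - diagSum d j) := by
      intro m
      induction m using Nat.strong_induction_on with
      | _ m ih =>
        intro i j hm hi hij hj
        rcases hj.eq_or_lt with rfl | hlt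
        · rw [dB_top, key _ _ _ rfl hi hij le_rfl]; ring
        · rcases hij.eq_or_lt with rfl | hlt'
          · have e := hD i hi hlt
            have e1 := ih _ (by omega) i (i+1) rfl hi (by omega) (by omega)
            have e2 := ih _ (by omega) (i+1) (i+1) rfl (by omega) (by omega) (by omega)
            linarith
          · have e := hC i j hi hlt' hlt
            have e1 := ih _ (by omega) i (j+1) rfl hi (by omega) (by omega)
            have e2 := ih _ (by omega) (i+1) (j+1) rfl (by omega) (by omega) (by omega)
            have e3 := ih _ (by omega) (i+1) j rfl (by omega) (by omega) (by omega)
            linarith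
    exact ⟨fun i j => key _ i j rfl, fun i j => keyB _ i j rfl⟩
  · rintro ⟨h1, h2⟩ ⟨k, i, j⟩ hf
    rcases hf with ⟨hk, a, b, c⟩ | ⟨hk, a, b, c⟩ | ⟨hk, a, b, c⟩ | ⟨hk, a, b, c⟩ <;>
      dsimp only at hk a b c <;> subst hk <;> simp only [facetLhs, facetRhs]
    · rw [h1 i (i+1) a (by omega) b, diagSum_succ, diagSum_succ]; ring
    · rw [h1 i (j+1) (by omega) (by omega) (by omega), h1 (i+1) j (by omega) (by omega) (by omega),
        h1 i j (by omega) (by omega) (by omega),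
        h1 (i+1) (j+1) (by omega) (by omega) (by omega)]; ring
    · rw [h2 i (j+1) (by omega) (by omega) (by omega), h2 (i+1) j (by omega) (by omega) (by omega),
        h2 i j (by omega) (by omega) (by omega),
        h2 (i+1) (j+1) (by omega) (by omega) (by omega)]; ring
    · rw [h2 i (i+1) (by omega) (by omega) (by omega), h2 i i (by omega) (by omega) (by omega),
        h2 (i+1) (i+1) (by omega) (by omega) (by omega)]; ring

/-- `L′` as a submodule. -/
def Lsub (n : ℕ) : Submodule ℝ (SpRoot n → ℝ) where
  carrier := Lset n
  add_mem' := by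
    rintro a b ⟨a1, a2⟩ ⟨b1, b2⟩
    refine ⟨fun i j h1 h2 h3 => ?_, fun i j h1 h2 h3 => ?_⟩
    · have x := a1 i j h1 h2 h3
      have y := b1 i j h1 h2 h3
      simp only [dA, dB, dval_add', Finset.sum_add_distrib] at *
      linarith
    · have x := a2 i j h1 h2 h3
      have y := b2 i j h1 h2 h3
      simp only [dA, dB, dval_add', Finset.sum_add_distrib] at *
      linarith
  zero_mem' := by
    have : ∀ t, dval (0 : SpRoot n → ℝ) t = 0 := by intro t; unfold dval; split <;> rfl
    refine ⟨fun i j h1 h2 h3 => ?_, fun i j h1 h2 h3 => ?_⟩ <;> simp [dA, dB, this]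
  smul_mem' := by
    rintro c a ⟨a1, a2⟩
    refine ⟨fun i j h1 h2 h3 => ?_, fun i j h1 h2 h3 => ?_⟩
    · have x := a1 i j h1 h2 h3
      simp only [dA, dB, dval_smul', ← Finset.mul_sum] at *
      rw [x]
    · have x := a2 i j h1 h2 h3
      simp only [dA, dB, dval_smul', ← Finset.mul_sum] at *
      rw [x]; ring

/-- Restriction to the simple roots. -/
noncomputable def diagMap (n : ℕ) : Lsub n →ₗ[ℝ] (Fin n → ℝ) where
  toFun d k := dA d.1 (k + 1) (k + 1)
  map_add' a b := by ext k; simp [dA, dval_add']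
  map_smul' c a := by ext k; simp [dA, dval_smul']

theorem diagMap_injective {n : ℕ} (hn : 2 ≤ n) : Function.Injective (diagMap n) := by
  rintro ⟨a, ha⟩ ⟨b, hb⟩ hab
  have hd : ∀ k, dA a k k = dA b k k := by
    intro k
    by_cases hk : 1 ≤ k ∧ k ≤ n
    · have := congrFun hab ⟨k - 1, by omega⟩
      simpa [diagMap, Nat.sub_add_cancel hk.1] using this
    · have : ¬ IsSpRootIdx n (k, k, false) := fun h => hk ⟨h.1, h.2.2.1⟩
      simp [dA, dval, this]
  have hp : ∀ k, diagSum a k = diagSum b k := fun k => Finset.sum_congr rfl fun i _ => hd i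
  obtain ⟨a1, a2⟩ := (mem_Lset_iff hn a).1 ha
  obtain ⟨b1, b2⟩ := (mem_Lset_iff hn b).1 hb
  apply Subtype.ext
  funext ⟨⟨i, j, c⟩, h⟩
  have hh := h
  obtain ⟨h1, h2, h3, h4⟩ := hh
  dsimp only at h1 h2 h3 h4
  cases c
  · have : dA a i j = dA b i j := by rw [a1 i j h1 h2 h3, b1 i j h1 h2 h3, hp, hp]
    simpa [dA, dval, h] using this
  · have : dB a i j = dB b i j := by
      rw [a2 i j h1 h2 h3, b2 i j h1 h2 h3, hp, hp, hp, hp]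
    have hj : j ≠ n := by have := h4 rfl; omega
    simpa [dB, dval, rIdx, hj, h] using this

theorem diagMap_surjective {n : ℕ} (hn : 2 ≤ n) : Function.Surjective (diagMap n) := by
  intro c
  let c' : ℕ → ℝ := fun k => if h : 1 ≤ k ∧ k ≤ n then c ⟨k - 1, by omega⟩ else 0
  let d : SpRoot n → ℝ := fun t =>
    if t.1.2.2 = true then ∑ k ∈ Finset.Icc t.1.1 n, c' k + ∑ k ∈ Finset.Icc t.1.2.1 (n-1), c' k
    else ∑ k ∈ Finset.Icc t.1.1 t.1.2.1, c' k
  have hA : ∀ i j, 1 ≤ i → i ≤ j → j ≤ n → dA d i j = ∑ k ∈ Finset.Icc i j, c' k := by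
    intro i j h1 h2 h3
    have : IsSpRootIdx n (i, j, false) := ⟨h1, h2, h3, by simp⟩
    simp [dA, dval, this, d]
  have hdiag : ∀ i, 1 ≤ i → i ≤ n → dA d i i = c' i := by
    intro i h1 h2
    rw [hA i i h1 le_rfl h2]; simp
  have hsum : ∀ i j, 1 ≤ i → j ≤ n →
      ∑ k ∈ Finset.Icc i j, dA d k k = ∑ k ∈ Finset.Icc i j, c' k := by
    intro i j h1 h2
    refine Finset.sum_congr rfl fun k hk => ?_
    rw [Finset.mem_Icc] at hk
    exact hdiag k (by omega) (by omega)
  have hmem : d ∈ Lset n := by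
    refine ⟨fun i j h1 h2 h3 => ?_, fun i j h1 h2 h3 => ?_⟩
    · rw [hA i j h1 h2.le h3, hsum i j h1 h3]
    · rw [hsum i n h1 le_rfl, hsum j (n-1) (by omega) (by omega)]
      have : IsSpRootIdx n (i, j, true) := ⟨h1, h2, by dsimp only; omega, fun _ => h3⟩
      have hj : j ≠ n := by omega
      simp [dB, dval, rIdx, hj, this, d]
  refine ⟨⟨d, hmem⟩, ?_⟩
  funext k
  have hk := k.2
  change dA d (k + 1) (k + 1) = c k
  rw [hdiag _ (by omega) (by omega)]
  have : 1 ≤ (k : ℕ) + 1 ∧ (k : ℕ) + 1 ≤ n := by omega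
  simp [c', this]

/-- The lineality space of `K_{2n}` equals `L′`: a point `d ∈ ℝ^{Φ⁺}` satisfies
`d ∈ K_{2n}` and `-d ∈ K_{2n}` if and only if `d ∈ L′`; moreover `L′` has dimension `n`. -/
theorem spFFLV_cone_lineality (n : ℕ) (hn : 2 ≤ n) :
    (∀ d : SpRoot n → ℝ, (d ∈ Kcone n ∧ -d ∈ Kcone n) ↔ d ∈ Lset n) ∧
    Module.rank ℝ (Submodule.span ℝ (Lset n)) = n := by
  refine ⟨fun d => (lineality_eq_iff d).trans (facets_eq_iff hn d), ?_⟩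
  have hs : Submodule.span ℝ (Lset n) = Lsub n := Submodule.span_eq (Lsub n)
  rw [hs, (LinearEquiv.ofBijective (diagMap n)
    ⟨diagMap_injective hn, diagMap_surjective hn⟩).rank_eq]
  simp
end

section
/- The symplectic FFLV degree cone K_{2n} is a simplicial cone: there exist N = n(n−1) vectors v_1, …, v_N ∈ ℝ^{Φ⁺} whose images in the quotient space ℝ^{Φ⁺}/L′ are linearly independent and such that K_{2n} = L′ + { c_1 v_1 + … + c_N v_N : c_1, …, c_N ≥ 0 }, where L′ is the lineality space of K_{2n}. -/
namespace SpAux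

lemma dval_add {n : ℕ} (x y : SpRoot n → ℝ) (t) : dval (x + y) t = dval x t + dval y t := by
  unfold dval; split_ifs
  · rfl
  · simp

lemma dval_smul {n : ℕ} (c : ℝ) (y : SpRoot n → ℝ) (t) : dval (c • y) t = c * dval y t := by
  unfold dval; split_ifs
  · rfl
  · simp

/-- The facet functionals. -/
noncomputable def F (n : ℕ) : (SpRoot n → ℝ) →ₗ[ℝ] (Facets n → ℝ) where
  toFun d f := facetLhs d f.1 - facetRhs d f.1
  map_add' x y := by
    ext ⟨⟨k, i, j⟩, hf⟩
    cases k <;> simp only [facetLhs, facetRhs, dA, dB, dval_add, Pi.add_apply] <;> ring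
  map_smul' c y := by
    ext ⟨⟨k, i, j⟩, hf⟩
    cases k <;> simp only [facetLhs, facetRhs, dA, dB, dval_smul, Pi.smul_apply, smul_eq_mul,
      RingHom.id_apply] <;> ring

/-- Facet functionals together with the diagonal coordinates. -/
noncomputable def G (n : ℕ) : (SpRoot n → ℝ) →ₗ[ℝ] (Facets n → ℝ) × (Fin n → ℝ) :=
  (F n).prod
    { toFun := fun d k => dA d (k.1 + 1) (k.1 + 1)
      map_add' := fun x y => by ext k; simp only [dA, dval_add, Pi.add_apply]
      map_smul' := fun c y => by
        ext k; simp only [dA, dval_smul, Pi.smul_apply, smul_eq_mul, RingHom.id_apply] }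

lemma dB_n {n : ℕ} (d : SpRoot n → ℝ) (i : ℕ) : dB d i n = dA d i n := by
  simp [dB, dA, rIdx]

lemma sum_bot (a : ℕ → ℝ) {i j : ℕ} (h : i ≤ j) :
    ∑ k ∈ Finset.Icc i j, a k = a i + ∑ k ∈ Finset.Icc (i + 1) j, a k := by
  rw [← Finset.insert_Icc_add_one_left_eq_Icc h, Finset.sum_insert (by simp)]

lemma mem_L_iff {n : ℕ} (hn : 2 ≤ n) (d : SpRoot n → ℝ) : d ∈ Lset n ↔ F n d = 0 := by
  constructor
  · rintro ⟨h1, h2⟩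
    have h1' : ∀ i j : ℕ, 1 ≤ i → i ≤ j → j ≤ n → dA d i j = ∑ k ∈ Finset.Icc i j, dA d k k := by
      intro i j hi hij hj
      rcases hij.eq_or_lt with rfl | h
      · simp
      · exact h1 i j hi h hj
    have h2' : ∀ i j : ℕ, 1 ≤ i → i ≤ j → j ≤ n → dB d i j =
        (∑ k ∈ Finset.Icc i n, dA d k k) + ∑ k ∈ Finset.Icc j (n-1), dA d k k := by
      intro i j hi hij hj
      rcases hj.eq_or_lt with rfl | h
      · rw [dB_n, h1' i j hi hij le_rfl, Finset.Icc_eq_empty (a := j) (by omega)]; simp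
      · exact h2 i j hi hij h
    ext ⟨⟨k, i, j⟩, hf⟩
    simp only [Facets, Set.mem_ofPred_eq] at hf
    change facetLhs d (k, i, j) - facetRhs d (k, i, j) = 0
    rcases hf with ⟨rfl, hi, hj, rfl⟩ | ⟨rfl, hi, hij, hj⟩ | ⟨rfl, hi, hij, hj⟩ | ⟨rfl, hi, hj, rfl⟩
    · simp only [facetLhs, facetRhs]
      rw [h1' i (i+1) hi (by omega) hj, sum_bot _ (by omega : i ≤ i + 1)]
      simp
    · simp only [facetLhs, facetRhs]
      rw [h1' i j hi (by omega) (by omega), h1' (i+1) (j+1) (by omega) (by omega) hj,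
        h1' i (j+1) hi (by omega) hj, h1' (i+1) j (by omega) (by omega) (by omega),
        sum_bot _ (by omega : i ≤ j), sum_bot _ (by omega : i ≤ j + 1)]
      ring
    · simp only [facetLhs, facetRhs]
      rw [h2' i (j+1) hi (by omega) hj, h2' (i+1) j (by omega) (by omega) (by omega),
        h2' i j hi (by omega) (by omega), h2' (i+1) (j+1) (by omega) (by omega) hj]
      ring
    · simp only [facetLhs, facetRhs]
      rw [h2' i (i+1) hi (by omega) hj, h2' i i hi (by omega) (by omega),
        h2' (i+1) (i+1) (by omega) (by omega) hj,
        sum_bot _ (by omega : i ≤ n), sum_bot _ (by omega : i ≤ n - 1)]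
      ring
  · intro h
    have hF : ∀ f ∈ Facets n, facetLhs d f - facetRhs d f = 0 := fun f hf => congrFun h ⟨f, hf⟩
    have hA : ∀ i, 1 ≤ i → i + 1 ≤ n → dA d i i + dA d (i+1) (i+1) - dA d i (i+1) = 0 :=
      fun i h1 h2 => hF (FacetKind.A, i, i+1) (by simp [Facets]; omega)
    have hB : ∀ i j, 1 ≤ i → i < j → j + 1 ≤ n →
        dA d i j + dA d (i+1) (j+1) - (dA d i (j+1) + dA d (i+1) j) = 0 :=
      fun i j h1 h2 h3 => hF (FacetKind.B, i, j) (by simp [Facets]; omega)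
    have hC : ∀ i j, 1 ≤ i → i < j → j + 1 ≤ n →
        dB d i (j+1) + dB d (i+1) j - (dB d i j + dB d (i+1) (j+1)) = 0 :=
      fun i j h1 h2 h3 => hF (FacetKind.C, i, j) (by simp [Facets]; omega)
    have hD : ∀ i, 1 ≤ i → i + 1 ≤ n →
        2 * dB d i (i+1) - (dB d i i + dB d (i+1) (i+1)) = 0 :=
      fun i h1 h2 => hF (FacetKind.D, i, i+1) (by simp [Facets]; omega)
    have sA : ∀ i, 1 ≤ i → ∀ j, i + 1 ≤ j → j ≤ n → dA d i j = dA d i i + dA d (i+1) j := by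
      intro i hi j hj
      induction j, hj using Nat.le_induction with
      | base => intro hn'; linarith [hA i hi hn']
      | succ j hj ih => intro hn'; linarith [hB i j hi hj hn', ih (by omega)]
    have tA : ∀ m i j, 1 ≤ i → i + m = j → j ≤ n →
        dA d i j = ∑ k ∈ Finset.Icc i j, dA d k k := by
      intro m
      induction m with
      | zero => intro i j _ hij _; obtain rfl : i = j := by omega
                simp
      | succ m ih =>
        intro i j hi hij hj
        rw [sA i hi j (by omega) hj, sum_bot _ (by omega : i ≤ j),
          ih (i+1) j (by omega) (by omega) hj]
    have sB : ∀ m i j, 1 ≤ i → i < j → j + m = n → dB d i j = dA d i i + dB d (i+1) j := by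
      intro m
      induction m with
      | zero =>
        intro i j hi hij hj; obtain rfl : j = n := by omega
        rw [dB_n, dB_n]; exact sA i hi j hij le_rfl
      | succ m ih =>
        intro i j hi hij hj
        linarith [hC i j hi hij (by omega), ih i (j+1) hi (by omega) (by omega)]
    have tB : ∀ m i, 1 ≤ i → i + m = n → dB d i i =
        (∑ k ∈ Finset.Icc i n, dA d k k) + ∑ k ∈ Finset.Icc i (n-1), dA d k k := by
      intro m
      induction m with
      | zero =>
        intro i hi hj; obtain rfl : i = n := by omega
        rw [dB_n, Finset.Icc_eq_empty (a := i) (b := i - 1) (by omega)]; simp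
      | succ m ih =>
        intro i hi hj
        rw [sum_bot _ (by omega : i ≤ n), sum_bot _ (by omega : i ≤ n - 1)]
        linarith [hD i hi (by omega), ih (i+1) (by omega) (by omega),
          sB m i (i+1) hi (by omega) (by omega)]
    have uB : ∀ m i j, 1 ≤ i → i + m = j → j ≤ n → dB d i j =
        (∑ k ∈ Finset.Icc i n, dA d k k) + ∑ k ∈ Finset.Icc j (n-1), dA d k k := by
      intro m
      induction m with
      | zero =>
        intro i j hi hij hj; obtain rfl : i = j := by omega
        exact tB (n - i) i hi (by omega)
      | succ m ih =>
        intro i j hi hij hj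
        rw [sB (n - j) i j hi (by omega) (by omega), sum_bot _ (by omega : i ≤ n),
          ih (i+1) j (by omega) (by omega) hj]
        ring
    exact ⟨fun i j hi hij hj => tA (j - i) i j hi (by omega) hj,
      fun i j hi hij hj => uB (j - i) i j hi (by omega) (by omega)⟩

/-- Positive roots are counted by `n²`. -/
def rootEquiv (n : ℕ) : SpRoot n ≃ Fin n × Fin n where
  toFun t := match t with
    | ⟨(i, j, false), h⟩ => (⟨j - 1, by simp [IsSpRootIdx] at h; omega⟩,
        ⟨i - 1, by simp [IsSpRootIdx] at h; omega⟩)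
    | ⟨(i, j, true), h⟩ => (⟨i - 1, by simp [IsSpRootIdx] at h; omega⟩,
        ⟨j, by simp [IsSpRootIdx] at h; omega⟩)
  invFun p := if h : p.2.1 ≤ p.1.1 then
      ⟨(p.2.1 + 1, p.1.1 + 1, false), by simp [IsSpRootIdx]; omega⟩
    else ⟨(p.1.1 + 1, p.2.1, true), by simp [IsSpRootIdx]; omega⟩
  left_inv := by
    rintro ⟨⟨i, j, _ | _⟩, h⟩
    · have h' := h
      simp [IsSpRootIdx] at h'
      have : i - 1 ≤ j - 1 := by omega
      refine (dif_pos this).trans (Subtype.ext ?_)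
      simp; omega
    · have h' := h
      simp [IsSpRootIdx] at h'
      have : ¬ (j ≤ i - 1) := by omega
      refine (dif_neg this).trans (Subtype.ext ?_)
      simp; omega
  right_inv := by
    rintro ⟨⟨a, ha⟩, ⟨b, hb⟩⟩
    by_cases h : b ≤ a <;> simp [h]

/-- Facets are counted by `n(n-1)`. -/
def facetEquiv (n : ℕ) : Facets n ≃ Fin n × Fin (n - 1) where
  toFun t := match t with
    | ⟨(FacetKind.A, i, j), h⟩ => (⟨i, by simp [Facets] at h; omega⟩,
        ⟨i - 1, by simp [Facets] at h; omega⟩)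
    | ⟨(FacetKind.B, i, j), h⟩ => (⟨j, by simp [Facets] at h; omega⟩,
        ⟨i - 1, by simp [Facets] at h; omega⟩)
    | ⟨(FacetKind.C, i, j), h⟩ => (⟨i - 1, by simp [Facets] at h; omega⟩,
        ⟨j - 1, by simp [Facets] at h; omega⟩)
    | ⟨(FacetKind.D, i, j), h⟩ => (⟨i - 1, by simp [Facets] at h; omega⟩,
        ⟨i - 1, by simp [Facets] at h; omega⟩)
  invFun p :=
    if h1 : p.1.1 = p.2.1 + 1 then ⟨(FacetKind.A, p.1.1, p.1.1 + 1), by simp [Facets]; omega⟩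
    else if h2 : p.2.1 + 1 < p.1.1 then
      ⟨(FacetKind.B, p.2.1 + 1, p.1.1), by simp [Facets]; omega⟩
    else if h3 : p.1.1 < p.2.1 then
      ⟨(FacetKind.C, p.1.1 + 1, p.2.1 + 1), by simp [Facets]; omega⟩
    else ⟨(FacetKind.D, p.1.1 + 1, p.1.1 + 2), by simp [Facets]; omega⟩
  left_inv := by
    rintro ⟨⟨_ | _ | _ | _, i, j⟩, h⟩ <;> have h' := h <;> simp [Facets] at h' <;>
      apply Subtype.ext <;> dsimp only <;> split_ifs <;> simp <;> omega
  right_inv := by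
    rintro ⟨⟨a, ha⟩, ⟨b, hb⟩⟩
    dsimp only
    by_cases h1 : a = b + 1
    · simp [h1]
    by_cases h2 : b + 1 < a
    · simp [h1, h2]
    by_cases h3 : a < b
    · simp [h1, h2, h3]
    · simp [h1, h2, h3]; omega

noncomputable instance (n : ℕ) : Fintype (SpRoot n) := Fintype.ofEquiv _ (rootEquiv n).symm
noncomputable instance (n : ℕ) : Fintype (Facets n) := Fintype.ofEquiv _ (facetEquiv n).symm

lemma G_inj {n : ℕ} (hn : 2 ≤ n) : Function.Injective (G n) := by
  rw [← LinearMap.ker_eq_bot, LinearMap.ker_eq_bot']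
  intro d hd
  have h1 : F n d = 0 := congrArg Prod.fst hd
  have h2 : ∀ k : Fin n, dA d (k.1 + 1) (k.1 + 1) = 0 := fun k => congrFun (congrArg Prod.snd hd) k
  have h3 : ∀ k, 1 ≤ k → k ≤ n → dA d k k = 0 := by
    intro k hk hk'
    have := h2 ⟨k - 1, by omega⟩
    simpa [Nat.sub_add_cancel hk] using this
  obtain ⟨hA, hB⟩ := (mem_L_iff hn d).2 h1
  have hs : ∀ i j, 1 ≤ i → j ≤ n → ∑ k ∈ Finset.Icc i j, dA d k k = 0 := by
    intro i j hi hj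
    apply Finset.sum_eq_zero
    intro k hk
    rw [Finset.mem_Icc] at hk
    exact h3 k (by omega) (by omega)
  funext ⟨⟨i, j, b⟩, h⟩
  have h' := h
  obtain ⟨c1, c2, c3, c4⟩ := h'
  dsimp only at c1 c2 c3 c4
  cases b with
  | false =>
    have e : dA d i j = 0 := by
      rcases c2.eq_or_lt with rfl | hlt
      · exact h3 _ c1 c3
      · rw [hA i j c1 hlt c3, hs i j c1 c3]
    rw [dA, dval, dif_pos h] at e
    exact e
  | true =>
    have c4 := c4 rfl
    have e : dB d i j = 0 := by
      rw [hB i j c1 c2 c4, hs i n c1 le_rfl, hs j (n-1) (by omega) (by omega), add_zero]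
    have hjn : j ≠ n := by omega
    rw [dB, rIdx, if_neg (by tauto), dval, dif_pos h] at e
    exact e

lemma F_surj {n : ℕ} (hn : 2 ≤ n) : Function.Surjective (F n) := by
  have hs : Function.Surjective (G n) := by
    apply (LinearMap.injective_iff_surjective_of_finrank_eq_finrank ?_).1 (G_inj hn)
    rw [Module.finrank_prod, Module.finrank_pi, Module.finrank_pi, Module.finrank_pi,
      Fintype.card_congr (rootEquiv n), Fintype.card_congr (facetEquiv n)]
    simp
    obtain ⟨m, rfl⟩ : ∃ m, n = m + 1 := ⟨n - 1, by omega⟩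
    simp; ring
  intro y
  obtain ⟨d, hd⟩ := hs (y, 0)
  exact ⟨d, congrArg Prod.fst hd⟩

end SpAux

/-- The cone `K_{2n}` is simplicial: there are `N = n(n-1)` vectors whose
images in `ℝ^{Φ⁺}/L′` are linearly independent with
`K_{2n} = L′ + {c₁v₁ + ⋯ + c_Nv_N : cᵢ ≥ 0}`, where `L′` is the lineality space. -/
theorem spFFLV_cone_simplicial (n : ℕ) (hn : 2 ≤ n) :
    ∃ v : Fin (n * (n-1)) → (SpRoot n → ℝ),
      LinearIndependent ℝ
        (fun i => Submodule.Quotient.mk (p := Submodule.span ℝ (Lset n)) (v i)) ∧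
      Kcone n = {x | ∃ l ∈ Lset n, ∃ c : Fin (n * (n-1)) → ℝ,
        (∀ i, 0 ≤ c i) ∧ x = l + ∑ i, c i • v i} := by
  classical
  obtain ⟨w, hw⟩ : ∃ w : Facets n → (SpRoot n → ℝ),
      ∀ f, SpAux.F n (w f) = Pi.single f 1 :=
    ⟨fun f => (SpAux.F_surj hn (Pi.single f 1)).choose,
      fun f => (SpAux.F_surj hn (Pi.single f 1)).choose_spec⟩
  let e : Fin (n * (n-1)) ≃ Facets n := finProdFinEquiv.symm.trans (SpAux.facetEquiv n).symm
  have hsum : ∀ c : Fin (n * (n-1)) → ℝ, ∀ i,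
      SpAux.F n (∑ i, c i • w (e i)) (e i) = c i := by
    intro c i
    simp [map_sum, hw, Finset.sum_apply, Pi.single_apply]
  have hspan : Submodule.span ℝ (Lset n) = LinearMap.ker (SpAux.F n) := by
    have : Lset n = (LinearMap.ker (SpAux.F n) : Set _) := by
      ext d; simp [SpAux.mem_L_iff hn]
    rw [this, Submodule.span_eq]
  refine ⟨fun i => w (e i), ?_, ?_⟩
  · apply LinearIndependent.of_comp
      ((Submodule.span ℝ (Lset n)).liftQ (SpAux.F n) hspan.le)
    rw [Fintype.linearIndependent_iff]
    intro c hc i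
    rw [← hsum c i, map_sum]
    simp only [map_smul]
    exact congrFun hc (e i)
  · ext x
    have hK : x ∈ Kcone n ↔ ∀ i, 0 ≤ SpAux.F n x (e i) := by
      constructor
      · intro h i
        exact sub_nonneg.2 (h (e i).1 (e i).2)
      · intro h f hf
        have := h (e.symm ⟨f, hf⟩)
        rw [Equiv.apply_symm_apply] at this
        exact sub_nonneg.1 this
    rw [hK]
    constructor
    · intro h
      refine ⟨x - ∑ i, SpAux.F n x (e i) • w (e i), ?_, fun i => SpAux.F n x (e i), h, by simp⟩
      rw [SpAux.mem_L_iff hn]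
      funext f
      obtain ⟨i, rfl⟩ := e.surjective f
      rw [map_sub, Pi.sub_apply, hsum (fun i => SpAux.F n x (e i)) i]
      simp
    · rintro ⟨l, hl, c, hc, rfl⟩ i
      rw [map_add, Pi.add_apply, hsum, (SpAux.mem_L_iff hn l).1 hl]
      simpa using hc i
end

section
/- Every d ∈ K_{2n} satisfies the inequalities (A_{i,j,k}): d_{i,j} + d_{j+1,k} ≥ d_{i,k} for all 1 ≤ i ≤ j < k ≤ n, and (B_{i,j,k,l}): d_{i,j} + d_{k,l} ≥ d_{i,l} + d_{k,j} for all 1 ≤ i < k ≤ j < l ≤ n. -/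
/-- Every `d ∈ K_{2n}` satisfies
`(A_{i,j,k}) : d_{i,j} + d_{j+1,k} ≥ d_{i,k}` for `1 ≤ i ≤ j < k ≤ n`, and
`(B_{i,j,k,l}) : d_{i,j} + d_{k,l} ≥ d_{i,l} + d_{k,j}` for `1 ≤ i < k ≤ j < l ≤ n`. -/
theorem spFFLV_ineq_A_B (n : ℕ) (hn : 2 ≤ n) (d : SpRoot n → ℝ) (hd : d ∈ Kcone n) :
    (∀ i j k : ℕ, 1 ≤ i → i ≤ j → j < k → k ≤ n →
      dA d i k ≤ dA d i j + dA d (j+1) k) ∧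
    (∀ i j k l : ℕ, 1 ≤ i → i < k → k ≤ j → j < l → l ≤ n →
      dA d i l + dA d k j ≤ dA d i j + dA d k l) := by
  have hA : ∀ i : ℕ, 1 ≤ i → i + 1 ≤ n →
      dA d i (i+1) ≤ dA d i i + dA d (i+1) (i+1) := by
    intro i h1 h2
    exact hd (FacetKind.A, i, i+1) (Or.inl ⟨rfl, h1, h2, rfl⟩)
  have hB : ∀ i j : ℕ, 1 ≤ i → i < j → j + 1 ≤ n →
      dA d i (j+1) + dA d (i+1) j ≤ dA d i j + dA d (i+1) (j+1) := by
    intro i j h1 h2 h3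
    exact hd (FacetKind.B, i, j) (Or.inr (Or.inl ⟨rfl, h1, h2, h3⟩))
  have hB1 : ∀ i j k : ℕ, 1 ≤ i → i + 1 ≤ k → k ≤ j → j + 1 ≤ n →
      dA d i (j+1) + dA d k j ≤ dA d i j + dA d k (j+1) := by
    intro i j k h1 hik
    induction k, hik using Nat.le_induction with
    | base => intro h2 h3; exact hB i j h1 (by omega) h3
    | succ k hk ih =>
      intro h2 h3
      have e1 := ih (by omega) h3
      have e2 := hB k j (by omega) (by omega) h3
      linarith
  have hB2 : ∀ i j k l : ℕ, 1 ≤ i → i < k → k ≤ j → j + 1 ≤ l → l ≤ n →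
      dA d i l + dA d k j ≤ dA d i j + dA d k l := by
    intro i j k l h1 hik hkj hjl
    induction l, hjl using Nat.le_induction with
    | base => intro h3; exact hB1 i j k h1 hik hkj h3
    | succ l hl ih =>
      intro h3
      have e1 := ih (by omega)
      have e2 := hB1 i l k h1 hik (by omega) h3
      linarith
  refine ⟨?_, fun i j k l h1 h2 h3 h4 h5 => hB2 i j k l h1 h2 h3 h4 h5⟩
  intro i j k h1 hij hjk hk
  have e1 : dA d i (j+1) ≤ dA d i j + dA d (j+1) (j+1) := by
    have a := hA j (by omega) (by omega)
    rcases Nat.eq_or_lt_of_le hij with h | h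
    · subst h; exact a
    · have b := hB2 i j j (j+1) h1 h le_rfl le_rfl (by omega)
      linarith
  rcases Nat.eq_or_lt_of_le (Nat.succ_le_of_lt hjk) with h | h
  · subst h; exact e1
  · have b := hB2 i (j+1) (j+1) k h1 (by omega) le_rfl h hk
    linarith
end

section
/- Every d ∈ K_{2n} satisfies the inequalities (C_{i,j,k,l}): d_{i,l̄} + d_{k,j̄} ≥ d_{i,j̄} + d_{k,l̄} for all 1 ≤ i < k ≤ j < l ≤ n, and (D_{i,j}): 2·d_{i,j̄} ≥ d_{i,ī} + d_{j,j̄} for all 1 ≤ i < j ≤ n. -/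
/-- Every `d ∈ K_{2n}` satisfies
`(C_{i,j,k,l}) : d_{i,l̄} + d_{k,j̄} ≥ d_{i,j̄} + d_{k,l̄}` for `1 ≤ i < k ≤ j < l ≤ n`, and
`(D_{i,j}) : 2·d_{i,j̄} ≥ d_{i,ī} + d_{j,j̄}` for `1 ≤ i < j ≤ n`. -/
theorem spFFLV_ineq_C_D (n : ℕ) (hn : 2 ≤ n) (d : SpRoot n → ℝ) (hd : d ∈ Kcone n) :
    (∀ i j k l : ℕ, 1 ≤ i → i < k → k ≤ j → j < l → l ≤ n →
      dB d i j + dB d k l ≤ dB d i l + dB d k j) ∧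
    (∀ i j : ℕ, 1 ≤ i → i < j → j ≤ n →
      dB d i i + dB d j j ≤ 2 * dB d i j) := by
  have hC : ∀ i j, 1 ≤ i → i < j → j + 1 ≤ n →
      dB d i j + dB d (i+1) (j+1) ≤ dB d i (j+1) + dB d (i+1) j := by
    intro i j h1 h2 h3
    exact hd (FacetKind.C, i, j) (Or.inr (Or.inr (Or.inl ⟨rfl, h1, h2, h3⟩)))
  have hD : ∀ i, 1 ≤ i → i + 1 ≤ n →
      dB d i i + dB d (i+1) (i+1) ≤ 2 * dB d i (i+1) := by
    intro i h1 h2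
    exact hd (FacetKind.D, i, i+1) (Or.inr (Or.inr (Or.inr ⟨rfl, h1, h2, rfl⟩)))
  -- first extend in the row direction, then in the column direction
  have hC1 : ∀ i j k, 1 ≤ i → i < k → k ≤ j → j + 1 ≤ n →
      dB d i j + dB d k (j+1) ≤ dB d i (j+1) + dB d k j := by
    intro i j k h1 h2
    induction k, h2 using Nat.le_induction with
    | base => intro h3 h4; exact hC i j h1 h3 h4
    | succ k hk ih =>
      intro h3 h4
      have a := ih (by omega) h4
      have b := hC k j (by omega) (by omega) h4
      linarith
  have hC2 : ∀ i j k l : ℕ, 1 ≤ i → i < k → k ≤ j → j < l → l ≤ n →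
      dB d i j + dB d k l ≤ dB d i l + dB d k j := by
    intro i j k l h1 h2 h3 h4
    induction l, h4 using Nat.le_induction with
    | base => intro h5; exact hC1 i j k h1 h2 h3 h5
    | succ l hl ih =>
      intro h5
      have a := ih (by omega)
      have b := hC1 i l k h1 h2 (by omega) h5
      linarith
  refine ⟨hC2, ?_⟩
  intro i j h1 h2
  induction j, h2 using Nat.le_induction with
  | base => intro h3; exact hD i h1 h3
  | succ j hj ih =>
    intro h3
    have a := ih (by omega)
    have b := hD j (by omega) h3
    have c := hC1 i j j h1 (by omega) le_rfl h3
    linarith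
end

section
/- Every d ∈ K_{2n} satisfies the inequalities (E_{i,j,k}): d_{i,j} + d_{k,(j+1)̄} ≥ d_{i,k̄} for all 1 ≤ i ≤ j ≤ n−1 and i ≤ k ≤ j+1, and (F_{i,j,k}): d_{i,j} + d_{j+1,k̄} ≥ d_{i,k̄} for all 1 ≤ i ≤ j < k ≤ n. -/
/-- Abstract form of the argument, for arbitrary functions `a` (unbarred) and `b` (barred). -/
theorem abstract_E_F (n : ℕ) (a b : ℕ → ℕ → ℝ) (hab : ∀ i, b i n = a i n)
    (hA : ∀ i, 1 ≤ i → i + 1 ≤ n → a i (i+1) ≤ a i i + a (i+1) (i+1))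
    (hB : ∀ i j, 1 ≤ i → i < j → j + 1 ≤ n → a i (j+1) + a (i+1) j ≤ a i j + a (i+1) (j+1))
    (hC : ∀ i j, 1 ≤ i → i < j → j + 1 ≤ n → b i j + b (i+1) (j+1) ≤ b i (j+1) + b (i+1) j)
    (hD : ∀ i, 1 ≤ i → i + 1 ≤ n → b i i + b (i+1) (i+1) ≤ 2 * b i (i+1)) :
    (∀ i j k : ℕ, 1 ≤ i → i ≤ j → j + 1 ≤ n → i ≤ k → k ≤ j + 1 → b i k ≤ a i j + b k (j+1)) ∧
    (∀ i j k : ℕ, 1 ≤ i → i ≤ j → j < k → k ≤ n → b i k ≤ a i j + b (j+1) k) := by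
  -- iterate (B) over rows
  have hB' : ∀ i m k, 1 ≤ i → i ≤ m → m ≤ k → k + 1 ≤ n →
      a i (k+1) - a i k ≤ a m (k+1) - a m k := by
    intro i m k hi him
    induction m, him using Nat.le_induction with
    | base => intros; exact le_rfl
    | succ m hm ih =>
      intro h1 h2
      have := ih (by omega) h2
      have := hB m k (by omega) (by omega) h2
      linarith
  -- iterate (C) over rows
  have hC' : ∀ i m k, 1 ≤ i → i ≤ m → m ≤ k → k + 1 ≤ n →
      b i k - b i (k+1) ≤ b m k - b m (k+1) := by
    intro i m k hi him
    induction m, him using Nat.le_induction with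
    | base => intros; exact le_rfl
    | succ m hm ih =>
      intro h1 h2
      have := ih (by omega) h2
      have := hC m k (by omega) (by omega) h2
      linarith
  -- iterate (C) over columns, starting from (D)
  have hCD : ∀ k m, 1 ≤ k → k + 1 ≤ m → m ≤ n →
      b k k - b k (k+1) ≤ b k m - b (k+1) m := by
    intro k m hk hm
    induction m, hm using Nat.le_induction with
    | base => intro h; linarith [hD k hk h]
    | succ m hm ih =>
      intro h
      have := ih (by omega)
      have := hC k m hk (by omega) h
      linarith
  -- type A triangle inequality
  have hT : ∀ i j k, 1 ≤ i → i ≤ j → j + 1 ≤ k → k ≤ n → a i k ≤ a i j + a (j+1) k := by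
    intro i j k hi hij hk
    induction k, hk using Nat.le_induction with
    | base =>
      intro h
      have := hB' i j j hi hij le_rfl h
      have := hA j (by omega) h
      linarith
    | succ k hk ih =>
      intro h
      have := ih (by omega)
      have := hB' i (j+1) k hi (by omega) hk h
      linarith
  have hF : ∀ i j k : ℕ, 1 ≤ i → i ≤ j → j < k → k ≤ n → b i k ≤ a i j + b (j+1) k := by
    intro i j k hi hij hjk hk
    induction hk using Nat.decreasingInduction with
    | self => rw [hab, hab]; exact hT i j n hi hij hjk le_rfl
    | of_succ k hk ih =>
      have := ih (by omega)
      have := hC' i (j+1) k hi (by omega) hjk hk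
      linarith
  refine ⟨?_, hF⟩
  intro i j k hi hij hj hik hk
  induction hk using Nat.decreasingInduction with
  | self => exact hF i j (j+1) hi hij (by omega) hj
  | of_succ k hk ih =>
    have := ih (by omega)
    have := hC' i k k hi hik le_rfl (by omega)
    have := hCD k (j+1) (by omega) (by omega) hj
    linarith

/-- Every `d ∈ K_{2n}` satisfies
`(E_{i,j,k}) : d_{i,j} + d_{k,(j+1)̄} ≥ d_{i,k̄}` for `1 ≤ i ≤ j ≤ n-1`, `i ≤ k ≤ j+1`, and
`(F_{i,j,k}) : d_{i,j} + d_{j+1,k̄} ≥ d_{i,k̄}` for `1 ≤ i ≤ j < k ≤ n`. -/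
theorem spFFLV_ineq_E_F (n : ℕ) (hn : 2 ≤ n) (d : SpRoot n → ℝ) (hd : d ∈ Kcone n) :
    (∀ i j k : ℕ, 1 ≤ i → i ≤ j → j + 1 ≤ n → i ≤ k → k ≤ j + 1 →
      dB d i k ≤ dA d i j + dB d k (j+1)) ∧
    (∀ i j k : ℕ, 1 ≤ i → i ≤ j → j < k → k ≤ n →
      dB d i k ≤ dA d i j + dB d (j+1) k) := by
  refine abstract_E_F n (dA d) (dB d) ?_ ?_ ?_ ?_ ?_
  · intro i
    simp [dA, dB, rIdx]
  · intro i h1 h2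
    exact hd (FacetKind.A, i, i+1) (Or.inl ⟨rfl, h1, h2, rfl⟩)
  · intro i j h1 h2 h3
    exact hd (FacetKind.B, i, j) (Or.inr (Or.inl ⟨rfl, h1, h2, h3⟩))
  · intro i j h1 h2 h3
    exact hd (FacetKind.C, i, j) (Or.inr (Or.inr (Or.inl ⟨rfl, h1, h2, h3⟩)))
  · intro i h1 h2
    exact hd (FacetKind.D, i, i+1) (Or.inr (Or.inr (Or.inr ⟨rfl, h1, h2, rfl⟩)))
end

section
/- Every d ∈ K_{2n} satisfies the inequalities (G_{i,j,k,l}): d_{i,j̄} + d_{k,l̄} ≥ d_{i,k̄} + d_{j,l̄} for all 1 ≤ i < k ≤ j < l ≤ n, and (H_{i,j,k,l}): d_{i,l̄} + d_{k,j̄} ≥ d_{i,k̄} + d_{j,l̄} for all 1 ≤ i < k ≤ j < l ≤ n. -/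
/-- Summing local Monge inequalities gives the global one. -/
theorem monge_of_local (n : ℕ) (f : ℕ → ℕ → ℝ)
    (h : ∀ i j, 1 ≤ i → i + 1 ≤ n → 1 ≤ j → j + 1 ≤ n →
      f i j + f (i+1) (j+1) ≤ f i (j+1) + f (i+1) j)
    (a b c e : ℕ) (ha : 1 ≤ a) (hab : a ≤ b) (hb : b ≤ n)
    (hc : 1 ≤ c) (hce : c ≤ e) (he : e ≤ n) :
    f a c + f b e ≤ f a e + f b c := by
  have row : ∀ i, 1 ≤ i → i + 1 ≤ n → ∀ e, c ≤ e → e ≤ n →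
      f i c + f (i+1) e ≤ f i e + f (i+1) c := by
    intro i hi hin e hce
    induction e, hce using Nat.le_induction with
    | base => intro _; exact le_rfl
    | succ m hm ih =>
      intro hmn
      have h1 := ih (by omega)
      have h2 := h i m hi hin (by omega) hmn
      linarith
  induction b, hab using Nat.le_induction with
  | base => linarith
  | succ m hm ih =>
    have h1 := ih (by omega)
    have h2 := row m (by omega) hb e hce he
    linarith

/-- Every `d ∈ K_{2n}` satisfies
`(G_{i,j,k,l}) : d_{i,j̄} + d_{k,l̄} ≥ d_{i,k̄} + d_{j,l̄}` and
`(H_{i,j,k,l}) : d_{i,l̄} + d_{k,j̄} ≥ d_{i,k̄} + d_{j,l̄}` for `1 ≤ i < k ≤ j < l ≤ n`. -/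
theorem spFFLV_ineq_G_H (n : ℕ) (hn : 2 ≤ n) (d : SpRoot n → ℝ) (hd : d ∈ Kcone n) :
    (∀ i j k l : ℕ, 1 ≤ i → i < k → k ≤ j → j < l → l ≤ n →
      dB d i k + dB d j l ≤ dB d i j + dB d k l) ∧
    (∀ i j k l : ℕ, 1 ≤ i → i < k → k ≤ j → j < l → l ≤ n →
      dB d i k + dB d j l ≤ dB d i l + dB d k j) := by
  have hC : ∀ i j, 1 ≤ i → i < j → j + 1 ≤ n →
      dB d i j + dB d (i+1) (j+1) ≤ dB d i (j+1) + dB d (i+1) j := by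
    intro i j h1 h2 h3
    exact hd (FacetKind.C, i, j) (Or.inr (Or.inr (Or.inl ⟨rfl, h1, h2, h3⟩)))
  have hD : ∀ i, 1 ≤ i → i + 1 ≤ n →
      dB d i i + dB d (i+1) (i+1) ≤ 2 * dB d i (i+1) := by
    intro i h1 h2
    exact hd (FacetKind.D, i, i+1) (Or.inr (Or.inr (Or.inr ⟨rfl, h1, h2, rfl⟩)))
  -- the symmetric extension of `dB d`
  have key := monge_of_local n (fun a b => dB d (min a b) (max a b)) (by
    intro i j hi hin hj hjn
    rcases lt_trichotomy i j with hij | rfl | hij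
    · have := hC i j hi hij hjn
      simpa [min_eq_left, max_eq_right, hij.le, Nat.le_succ_of_le hij.le,
        Nat.succ_le_of_lt hij] using this
    · have := hD i hi hin
      simp
      linarith
    · have := hC j i hj hij hin
      simp [min_eq_right, max_eq_left, hij.le, Nat.le_succ_of_le hij.le,
        Nat.succ_le_of_lt hij]
      linarith)
  constructor
  · intro i j k l hi hik hkj hjl hl
    have := key k j i l (by omega) hkj (by omega) hi (by omega) hl
    simp only [min_eq_right hik.le, max_eq_left hik.le, min_eq_left hjl.le,
      max_eq_right hjl.le, min_eq_left (hkj.trans hjl.le), max_eq_right (hkj.trans hjl.le),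
      min_eq_right (hik.le.trans hkj), max_eq_left (hik.le.trans hkj)] at this
    linarith
  · intro i j k l hi hik hkj hjl hl
    have hil : i ≤ l := by omega
    have := key i j k l hi (by omega) (by omega) (by omega) (by omega) hl
    simp only [min_eq_left hik.le, max_eq_right hik.le, min_eq_left hjl.le,
      max_eq_right hjl.le, min_eq_left hil, max_eq_right hil,
      min_eq_right hkj, max_eq_left hkj] at this
    exact this
end

section
/- For every d ∈ K_{2n} and all real numbers a and b, the span of all commutators XY − YX with X in span{ f_β : β ∈ Φ⁺, d(β) ≤ a } and Y in span{ f_β : β ∈ Φ⁺, d(β) ≤ b } (subspaces of the space of 2n×2n complex matrices) is contained in span{ f_β : β ∈ Φ⁺, d(β) ≤ a + b }. In other words, the subspaces (n₋)_{≤m}^d := span{ f_β : d(β) ≤ m } form an ℝ-filtration of the Lie algebra spanned by the root vectors f_β. -/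
/-- The elementary `2n × 2n` matrix with a `1` in row `p`, column `q` (rows and columns
numbered `1, …, 2n`) and `0` elsewhere. -/
noncomputable def Emat (n p q : ℕ) : Matrix (Fin (2*n)) (Fin (2*n)) ℂ :=
  Matrix.of fun a b => if a.val + 1 = p ∧ b.val + 1 = q then 1 else 0

/-- The root vectors `f_β` of `sp_{2n}` as `2n × 2n` matrices:
`f_{i,ī} = E_{ī,i}`, `f_{i,j} = E_{j+1,i} - E_{ī,(j+1)̄}` for `j < n`,
`f_{i,j̄} = E_{j̄,i} + E_{ī,j}` for `i < j`, with `ī := 2n+1-i`, and the root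
`α_{i,n} = α_{i,n̄}` (for `i < n`) carrying the vector `f_{i,n̄}`. -/
noncomputable def fvec (n : ℕ) : ℕ × ℕ × Bool → Matrix (Fin (2*n)) (Fin (2*n)) ℂ
  | (i, j, false) =>
      if j < n then Emat n (j+1) i - Emat n (2*n+1-i) (2*n+1-(j+1))
      else if i < n then Emat n (n+1) i + Emat n (2*n+1-i) n
      else Emat n (n+1) n
  | (i, j, true) =>
      if i = j then Emat n (2*n+1-i) i
      else Emat n (2*n+1-j) i + Emat n (2*n+1-i) j

/-- The standard basis vector `e_x` of `ℂ^{2n}` (coordinates numbered `1, …, 2n`). -/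
noncomputable def evec (n x : ℕ) : Fin (2*n) → ℂ :=
  fun a => if a.val + 1 = x then 1 else 0


/-- Sign of a coordinate. -/
noncomputable def sgc (n x : ℕ) : ℂ := if x ≤ n then 1 else -1

/-- Uniform root vector attached to a position below the diagonal. -/
noncomputable def gvec (n q p : ℕ) : Matrix (Fin (2*n)) (Fin (2*n)) ℂ :=
  Emat n p q - (sgc n p * sgc n q) • Emat n (2*n+1-q) (2*n+1-p)

/-- Uniform degree attached to a position on or below the diagonal. -/
noncomputable def Ddeg {n : ℕ} (d : SpRoot n → ℝ) (q p : ℕ) : ℝ :=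
  if q = p then 0 else
  if q + p ≤ 2*n+1 then (if p ≤ n then dA d q (p-1) else dB d q (2*n+1-p))
  else (if n + 1 ≤ q then dA d (2*n+1-p) (2*n+1-q-1) else dB d (2*n+1-p) q)

theorem sgc_sq (n x : ℕ) : sgc n x * sgc n x = 1 := by
  unfold sgc; split_ifs <;> norm_num

theorem sgc_bar (n x : ℕ) (h1 : 1 ≤ x) (h2 : x ≤ 2*n) : sgc n (2*n+1-x) = - sgc n x := by
  unfold sgc
  split_ifs <;> first | omega | norm_num

theorem Emat_mul (n p q r s : ℕ) (h1 : 1 ≤ q) (h2 : q ≤ 2*n) :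
    Emat n p q * Emat n r s = (if q = r then (1:ℂ) else 0) • Emat n p s := by
  ext a b
  simp only [Matrix.mul_apply, Emat, Matrix.of_apply, Matrix.smul_apply, smul_eq_mul]
  rw [Finset.sum_eq_single (⟨q-1, by omega⟩ : Fin (2*n))]
  · have : q - 1 + 1 = q := by omega
    simp only [this]
    split_ifs <;> simp_all
  · intro c _ hc
    have : c.val + 1 ≠ q := fun h => hc (Fin.ext (by simp; omega))
    simp [this]
  · simp

theorem gvec_comm (n q p s r : ℕ) (hq : 1 ≤ q) (hqp : q < p) (hp : p ≤ 2*n)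
    (hs : 1 ≤ s) (hsr : s < r) (hr : r ≤ 2*n) :
    gvec n q p * gvec n s r - gvec n s r * gvec n q p =
      (if q = r then (1:ℂ) else 0) • gvec n s p
      - (if s = p then (1:ℂ) else 0) • gvec n q r
      - (if q = 2*n+1-s then (sgc n r * sgc n s) else 0) • gvec n (2*n+1-r) p
      + (if r = 2*n+1-p then (sgc n r * sgc n s) else 0) • gvec n q (2*n+1-s) := by
  have e1 : (2*n+1-p = r) ↔ (r = 2*n+1-p) := by omega
  have e2 : (2*n+1-p = 2*n+1-s) ↔ (s = p) := by omega
  have e3 : (2*n+1-r = p) ↔ (r = 2*n+1-p) := by omega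
  have e4 : (2*n+1-r = 2*n+1-q) ↔ (q = r) := by omega
  have e5 : (s = 2*n+1-q) ↔ (q = 2*n+1-s) := by omega
  have i1 : 2*n+1-(2*n+1-r) = r := by omega
  have i2 : 2*n+1-(2*n+1-s) = s := by omega
  simp only [gvec, sub_mul, mul_sub, smul_mul_assoc, mul_smul_comm]
  rw [Emat_mul _ _ _ _ _ hq (by omega), Emat_mul _ _ _ _ _ hq (by omega),
    Emat_mul _ _ _ _ _ (by omega) (by omega), Emat_mul _ _ _ _ _ (by omega) (by omega),
    Emat_mul _ _ _ _ _ hs (by omega), Emat_mul _ _ _ _ _ hs (by omega),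
    Emat_mul _ _ _ _ _ (by omega) (by omega), Emat_mul _ _ _ _ _ (by omega) (by omega)]
  rw [sgc_bar n r (by omega) (by omega), sgc_bar n s (by omega) (by omega)]
  simp only [e1, e2, e3, e4, e5, i1, i2]
  have t1 : ∀ x : ℂ, (if q = r then x else 0) * (sgc n r * sgc n q) = if q = r then x else 0 := by
    intro x; split_ifs with h
    · rw [h, sgc_sq, mul_one]
    · simp
  have t2 : ∀ x : ℂ, (if s = p then x else 0) * (sgc n s * sgc n p) = if s = p then x else 0 := by
    intro x; split_ifs with h
    · rw [h, sgc_sq, mul_one]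
    · simp
  have t3 : (if q = 2*n+1-s then (1:ℂ) else 0) * (sgc n s * sgc n q)
      = - (if q = 2*n+1-s then 1 else 0) := by
    split_ifs with h
    · rw [h, sgc_bar n s (by omega) (by omega)]; linear_combination - sgc_sq n s
    · simp
  have t4 : (if r = 2*n+1-p then (1:ℂ) else 0) * (sgc n r * sgc n p)
      = - (if r = 2*n+1-p then 1 else 0) := by
    split_ifs with h
    · rw [h, sgc_bar n p (by omega) (by omega)]; linear_combination - sgc_sq n p
    · simp
  have u : ∀ (P : Prop) [Decidable P] (x : ℂ), (if P then x else 0) = (if P then 1 else 0) * x := by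
    intro P _ x; split_ifs <;> simp
  rw [u (q = 2*n+1-s) (sgc n r * sgc n s), u (r = 2*n+1-p) (sgc n r * sgc n s)]
  have t1' := t1 1
  have t2' := t2 1
  generalize (if q = r then (1:ℂ) else 0) = A at *
  generalize (if s = p then (1:ℂ) else 0) = B at *
  generalize (if q = 2*n+1-s then (1:ℂ) else 0) = C at *
  generalize (if r = 2*n+1-p then (1:ℂ) else 0) = F at *
  have hr2 := sgc_sq n r
  have hs2 := sgc_sq n s
  generalize sgc n p = σp at *
  generalize sgc n q = σq at *
  generalize sgc n r = σr at *
  generalize sgc n s = σs at *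
  simp only [smul_sub, smul_smul]
  match_scalars
  all_goals try ring1
  all_goals first
    | linear_combination ((σp * σs) * t1')
    | linear_combination -((σp * σs) * t1')
    | linear_combination ((σq * σr) * t2')
    | linear_combination -((σq * σr) * t2')
    | linear_combination (-(σr * σq)) * t4 + F * σp * σq * hr2 - F * σr * σq * hs2
    | linear_combination (σs * σp) * t3 - C * σp * σq * hs2 + C * σs * σp * hr2

section deg
variable {n : ℕ} {d : SpRoot n → ℝ}

theorem dB_n (d : SpRoot n → ℝ) (i : ℕ) : dB d i n = dA d i n := by
  simp [dB, dA, rIdx]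

theorem Ddeg_symm (d : SpRoot n → ℝ) (q p : ℕ) (hq : 1 ≤ q) (hqp : q ≤ p) (hp : p ≤ 2*n) :
    Ddeg d (2*n+1-p) (2*n+1-q) = Ddeg d q p := by
  unfold Ddeg
  have i1 : 2*n+1-(2*n+1-q) = q := by omega
  have i2 : 2*n+1-(2*n+1-p) = p := by omega
  rw [i1, i2]
  split_ifs <;> first | omega | rfl | (congr 1 <;> omega)

theorem Ddeg_diag (d : SpRoot n → ℝ) (q : ℕ) : Ddeg d q q = 0 := by simp [Ddeg]

theorem Ddeg_A (d : SpRoot n → ℝ) (i j : ℕ) (h : i ≤ j) (hj : j ≤ n) (hi : 1 ≤ i) :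
    Ddeg d i (j+1) = dA d i j := by
  unfold Ddeg
  rw [if_neg (by omega), if_pos (by omega)]
  split_ifs with h2
  · rfl
  · have : j = n := by omega
    subst this
    rw [show 2*j+1-(j+1) = j by omega, dB_n]

theorem Ddeg_B (d : SpRoot n → ℝ) (i j p : ℕ) (h : i ≤ j) (hj : j ≤ n) (hi : 1 ≤ i)
    (hp : p + j = 2*n+1) : Ddeg d i p = dB d i j := by
  unfold Ddeg
  rw [if_neg (by omega), if_pos (by omega), if_neg (by omega)]
  congr 1; omega

theorem monge_low (hd : d ∈ Kcone n) (q p : ℕ) (hq : 1 ≤ q) (hqp : q + 1 ≤ p)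
    (h : q + p ≤ 2*n) :
    Ddeg d q (p+1) + Ddeg d (q+1) p ≤ Ddeg d q p + Ddeg d (q+1) (p+1) := by
  by_cases hpn : p ≤ n
  · obtain ⟨j, rfl⟩ : ∃ j, p = j + 1 := ⟨p-1, by omega⟩
    by_cases hj : j = q
    · subst hj
      have := hd (FacetKind.A, j, j+1) (Or.inl ⟨rfl, hq, hpn, rfl⟩)
      simp only [facetRhs, facetLhs] at this
      rw [Ddeg_diag, Ddeg_A _ _ _ (by omega) (by omega) (by omega),
        Ddeg_A _ _ _ (by omega) (by omega) (by omega),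
        Ddeg_A _ _ _ (by omega) (by omega) (by omega)]
      linarith
    · have := hd (FacetKind.B, q, j) (Or.inr (Or.inl ⟨rfl, hq, by simp; omega, hpn⟩))
      simp only [facetRhs, facetLhs] at this
      rw [Ddeg_A _ _ _ (by omega) (by omega) (by omega),
        Ddeg_A _ _ _ (by omega) (by omega) (by omega),
        Ddeg_A _ _ _ (by omega) (by omega) (by omega),
        Ddeg_A _ _ _ (by omega) (by omega) (by omega)]
      linarith
  · obtain ⟨j, hj⟩ : ∃ j, p + j = 2*n := ⟨2*n-p, by omega⟩
    by_cases hjq : j = q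
    · subst hjq
      have := hd (FacetKind.D, j, j+1) (Or.inr (Or.inr (Or.inr ⟨rfl, hq, by simp; omega, rfl⟩)))
      simp only [facetRhs, facetLhs] at this
      have e : Ddeg d (j+1) (p+1) = Ddeg d j p := by
        rw [← Ddeg_symm d j p (by omega) (by omega) (by omega)]
        congr 1 <;> omega
      rw [e, Ddeg_B d j j (p+1) (by omega) (by omega) (by omega) (by omega),
        Ddeg_B d j (j+1) p (by omega) (by omega) (by omega) (by omega),
        Ddeg_B d (j+1) (j+1) p (by omega) (by omega) (by omega) (by omega)]
      linarith
    · have := hd (FacetKind.C, q, j) (Or.inr (Or.inr (Or.inl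
        ⟨rfl, hq, by simp; omega, by simp; omega⟩)))
      simp only [facetRhs, facetLhs] at this
      rw [Ddeg_B d q j (p+1) (by omega) (by omega) (by omega) (by omega),
        Ddeg_B d q (j+1) p (by omega) (by omega) (by omega) (by omega),
        Ddeg_B d (q+1) j (p+1) (by omega) (by omega) (by omega) (by omega),
        Ddeg_B d (q+1) (j+1) p (by omega) (by omega) (by omega) (by omega)]
      linarith

theorem monge_adj (hd : d ∈ Kcone n) (q p : ℕ) (hq : 1 ≤ q) (hqp : q + 1 ≤ p)
    (hp : p + 1 ≤ 2*n) :
    Ddeg d q (p+1) + Ddeg d (q+1) p ≤ Ddeg d q p + Ddeg d (q+1) (p+1) := by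
  by_cases h : q + p ≤ 2*n
  · exact monge_low hd q p hq hqp h
  · have := monge_low hd (2*n-p) (2*n-q) (by omega) (by omega) (by omega)
    rw [← Ddeg_symm d q (p+1) (by omega) (by omega) (by omega),
      ← Ddeg_symm d (q+1) p (by omega) (by omega) (by omega),
      ← Ddeg_symm d q p (by omega) (by omega) (by omega),
      ← Ddeg_symm d (q+1) (p+1) (by omega) (by omega) (by omega)]
    rw [show 2*n+1-(p+1) = 2*n-p by omega, show 2*n+1-(q+1) = 2*n-q by omega,
      show 2*n+1-p = 2*n-p+1 by omega, show 2*n+1-q = 2*n-q+1 by omega]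
    linarith

theorem monge_row (hd : d ∈ Kcone n) (q p : ℕ) (hq : 1 ≤ q) (hp : p + 1 ≤ 2*n) (k : ℕ) :
    q + k ≤ p → Ddeg d q (p+1) + Ddeg d (q+k) p ≤ Ddeg d q p + Ddeg d (q+k) (p+1) := by
  induction k with
  | zero => intro _; simp only [add_zero]; linarith
  | succ k ih =>
    intro h
    have h1 := ih (by omega)
    have h2 := monge_adj hd (q+k) p (by omega) (by omega) hp
    rw [add_assoc] at h2
    linarith

theorem Ddeg_triangle (hd : d ∈ Kcone n) (q r p : ℕ) (hq : 1 ≤ q) (hqr : q ≤ r) (hrp : r ≤ p)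
    (hp : p ≤ 2*n) : Ddeg d q p ≤ Ddeg d q r + Ddeg d r p := by
  obtain ⟨m, rfl⟩ := Nat.exists_eq_add_of_le hrp
  clear hrp
  induction m with
  | zero => simp [Ddeg_diag]
  | succ m ih =>
    have h1 := ih (by omega)
    obtain ⟨k, rfl⟩ := Nat.exists_eq_add_of_le hqr
    have h2 := monge_row hd q (q+k+m) hq (by omega) k (by omega)
    rw [← add_assoc]
    linarith

theorem dA_root (d : SpRoot n → ℝ) (i j : ℕ) (h : IsSpRootIdx n (i, j, false)) :
    dA d i j = d ⟨(i, j, false), h⟩ := by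
  simp [dA, dval, h]

theorem dB_root (d : SpRoot n → ℝ) (i j : ℕ) (h : IsSpRootIdx n (i, j, true)) :
    dB d i j = d ⟨(i, j, true), h⟩ := by
  have hj : j ≠ n := by
    have := h.2.2.2 rfl
    simp at this; omega
  simp [dB, dval, rIdx, h, hj]

/-- Each root vector is a multiple of a uniform vector of the same degree. -/
theorem fvec_eq (d : SpRoot n → ℝ) (β : SpRoot n) :
    ∃ q p : ℕ, ∃ c : ℂ, 1 ≤ q ∧ q < p ∧ p ≤ 2*n ∧ Ddeg d q p = d β ∧
      fvec n β.val = c • gvec n q p := by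
  obtain ⟨⟨i, j, b⟩, h⟩ := β
  obtain ⟨h1, h2, h3, h4⟩ := id h
  simp only at h1 h2 h3 h4
  cases b with
  | false =>
    refine ⟨i, j+1, if i = n then 1/2 else 1, h1, by omega, by omega, ?_, ?_⟩
    · rw [Ddeg_A d i j h2 h3 h1, dA_root]
    · by_cases hj : j < n
      · simp only [fvec, gvec, sgc]
        rw [if_pos hj, if_neg (by omega), if_pos (by omega), if_pos (by omega)]
        simp
      · have : j = n := by omega
        subst this
        by_cases hi : i < j
        · simp only [fvec, gvec, sgc]
          rw [if_neg hj, if_pos hi, if_neg (by omega), if_neg (by omega), if_pos (by omega),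
            show 2*j+1-(j+1) = j by omega]
          simp
        · have : i = j := by omega
          subst this
          simp only [fvec, gvec, sgc]
          rw [if_neg hj, if_neg hi, if_pos trivial, if_neg (by omega), if_pos (by omega),
            show 2*i+1-(i+1) = i by omega, show 2*i+1-i = i+1 by omega]
          module
  | true =>
    have h5 := h4 rfl
    refine ⟨i, 2*n+1-j, if i = j then 1/2 else 1, h1, by omega, by omega, ?_, ?_⟩
    · rw [Ddeg_B d i j _ h2 h3 h1 (by omega), dB_root]
    · simp only [fvec, gvec, sgc]
      rw [if_neg (by omega : ¬ (2*n+1-j ≤ n)), if_pos (by omega : i ≤ n),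
        show 2*n+1-(2*n+1-j) = j by omega]
      by_cases hi : i = j
      · subst hi
        simp only [if_true]
        module
      · simp only [if_neg hi]
        module

/-- Half of the positions: the uniform vector is a multiple of a root vector. -/
theorem gvec_eq_low (d : SpRoot n → ℝ) (q p : ℕ) (hq : 1 ≤ q) (hqp : q < p)
    (h : q + p ≤ 2*n+1) :
    ∃ β : SpRoot n, ∃ c : ℂ, d β = Ddeg d q p ∧ gvec n q p = c • fvec n β.val := by
  by_cases hp : p ≤ n + 1
  · obtain ⟨j, rfl⟩ : ∃ j, p = j + 1 := ⟨p-1, by omega⟩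
    have hr : IsSpRootIdx n (q, j, false) := ⟨hq, by simp; omega, by simp; omega, by simp⟩
    refine ⟨⟨_, hr⟩, if q = n then 2 else 1, ?_, ?_⟩
    · rw [Ddeg_A d q j (by omega) (by omega) hq, dA_root d q j hr]
    · by_cases hj : j < n
      · simp only [fvec, gvec, sgc]
        rw [if_pos hj, if_pos (by omega), if_pos (by omega), if_neg (by omega)]
        simp
      · have : j = n := by omega
        subst this
        by_cases hi : q < j
        · simp only [fvec, gvec, sgc]
          rw [if_neg hj, if_pos hi, if_neg (by omega), if_pos (by omega), if_neg (by omega),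
            show 2*j+1-(j+1) = j by omega]
          simp
        · have : q = j := by omega
          subst this
          simp only [fvec, gvec, sgc]
          rw [if_neg hj, if_neg hi, if_neg (by omega), if_pos (by omega), if_pos trivial,
            show 2*q+1-(q+1) = q by omega, show 2*q+1-q = q+1 by omega]
          module
  · obtain ⟨j, hj⟩ : ∃ j, p + j = 2*n+1 := ⟨2*n+1-p, by omega⟩
    have hr : IsSpRootIdx n (q, j, true) :=
      ⟨hq, by simp; omega, by simp; omega, by simp; omega⟩
    refine ⟨⟨_, hr⟩, if q = j then 2 else 1, ?_, ?_⟩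
    · rw [Ddeg_B d q j p (by omega) (by omega) hq hj, dB_root d q j hr]
    · have : p = 2*n+1-j := by omega
      subst this
      simp only [fvec, gvec, sgc]
      rw [if_neg (by omega : ¬ (2*n+1-j ≤ n)), if_pos (by omega : q ≤ n),
        show 2*n+1-(2*n+1-j) = j by omega]
      by_cases hi : q = j
      · subst hi
        simp only [if_true]
        module
      · simp only [if_neg hi]
        module

theorem gvec_symm (q p : ℕ) (hq : 1 ≤ q) (hqp : q < p) (hp : p ≤ 2*n) :
    gvec n q p = (-(sgc n p * sgc n q)) • gvec n (2*n+1-p) (2*n+1-q) := by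
  unfold gvec
  rw [sgc_bar n p (by omega) hp, sgc_bar n q hq (by omega),
    show 2*n+1-(2*n+1-p) = p by omega, show 2*n+1-(2*n+1-q) = q by omega]
  have h1 := sgc_sq n p
  have h2 := sgc_sq n q
  match_scalars
  · linear_combination (-(sgc n q * sgc n q)) * h1 - h2
  · ring

theorem gvec_mem (d : SpRoot n → ℝ) (m : ℝ) (q p : ℕ) (hq : 1 ≤ q) (hqp : q < p)
    (hp : p ≤ 2*n) (hm : Ddeg d q p ≤ m) :
    gvec n q p ∈ Submodule.span ℂ
      {M : Matrix (Fin (2*n)) (Fin (2*n)) ℂ | ∃ β : SpRoot n, d β ≤ m ∧ M = fvec n β.val} := by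
  by_cases h : q + p ≤ 2*n+1
  · obtain ⟨β, c, h1, h2⟩ := gvec_eq_low d q p hq hqp h
    rw [h2]
    exact Submodule.smul_mem _ _ (Submodule.subset_span ⟨β, h1 ▸ hm, rfl⟩)
  · rw [gvec_symm q p hq hqp hp]
    rw [← Ddeg_symm d q p hq hqp.le hp] at hm
    obtain ⟨β, c, h1, h2⟩ := gvec_eq_low d (2*n+1-p) (2*n+1-q) (by omega) (by omega) (by omega)
    rw [h2]
    exact Submodule.smul_mem _ _ (Submodule.smul_mem _ _
      (Submodule.subset_span ⟨β, h1 ▸ hm, rfl⟩))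

theorem gvec_comm_mem (hd : d ∈ Kcone n) (m : ℝ) (q p s r : ℕ) (hq : 1 ≤ q) (hqp : q < p)
    (hp : p ≤ 2*n) (hs : 1 ≤ s) (hsr : s < r) (hr : r ≤ 2*n)
    (hm : Ddeg d q p + Ddeg d s r ≤ m) :
    gvec n q p * gvec n s r - gvec n s r * gvec n q p ∈ Submodule.span ℂ
      {M : Matrix (Fin (2*n)) (Fin (2*n)) ℂ | ∃ β : SpRoot n, d β ≤ m ∧ M = fvec n β.val} := by
  rw [gvec_comm n q p s r hq hqp hp hs hsr hr]
  have hsym := Ddeg_symm d s r hs hsr.le hr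
  refine Submodule.add_mem _ (Submodule.sub_mem _ (Submodule.sub_mem _ ?_ ?_) ?_) ?_
  · split_ifs with h
    · subst h
      refine Submodule.smul_mem _ _ (gvec_mem d m s p hs (by omega) hp ?_)
      have := Ddeg_triangle hd s q p hs hsr.le hqp.le hp
      linarith
    · simp
  · split_ifs with h
    · subst h
      refine Submodule.smul_mem _ _ (gvec_mem d m q r hq (by omega) hr ?_)
      have := Ddeg_triangle hd q s r hq hqp.le hsr.le hr
      linarith
    · simp
  · split_ifs with h
    · refine Submodule.smul_mem _ _ (gvec_mem d m _ p (by omega) (by omega) hp ?_)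
      have := Ddeg_triangle hd (2*n+1-r) q p (by omega) (by omega) hqp.le hp
      rw [← h] at hsym
      linarith
    · simp
  · split_ifs with h
    · refine Submodule.smul_mem _ _ (gvec_mem d m q _ hq (by omega) (by omega) ?_)
      have := Ddeg_triangle hd q p (2*n+1-s) hq hqp.le (by omega) (by omega)
      rw [show 2*n+1-r = p by omega] at hsym
      linarith
    · simp

end deg

/-- For `d ∈ K_{2n}` and `a, b ∈ ℝ`, every commutator `XY - YX` with
`X ∈ span{f_β : d(β) ≤ a}` and `Y ∈ span{f_β : d(β) ≤ b}` lies in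
`span{f_β : d(β) ≤ a + b}`: the subspaces `(n₋)^d_{≤ m}` form an ℝ-filtration of the Lie
algebra spanned by the root vectors. -/
theorem spFFLV_filtration (n : ℕ) (hn : 2 ≤ n) (d : SpRoot n → ℝ) (hd : d ∈ Kcone n)
    (a b : ℝ) :
    ∀ X ∈ Submodule.span ℂ
        {M : Matrix (Fin (2*n)) (Fin (2*n)) ℂ | ∃ β : SpRoot n, d β ≤ a ∧ M = fvec n β.val},
    ∀ Y ∈ Submodule.span ℂ
        {M : Matrix (Fin (2*n)) (Fin (2*n)) ℂ | ∃ β : SpRoot n, d β ≤ b ∧ M = fvec n β.val},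
      X * Y - Y * X ∈ Submodule.span ℂ
        {M : Matrix (Fin (2*n)) (Fin (2*n)) ℂ | ∃ β : SpRoot n, d β ≤ a + b ∧ M = fvec n β.val} := by
  intro X hX Y hY
  induction hX using Submodule.span_induction with
  | mem X hX =>
    obtain ⟨β, hβ, rfl⟩ := hX
    induction hY using Submodule.span_induction with
    | mem Y hY =>
      obtain ⟨γ, hγ, rfl⟩ := hY
      obtain ⟨q, p, c, hq, hqp, hp, hD, hf⟩ := fvec_eq d β
      obtain ⟨s, r, c', hs, hsr, hr, hD', hf'⟩ := fvec_eq d γ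
      rw [hf, hf']
      have key := gvec_comm_mem hd (a+b) q p s r hq hqp hp hs hsr hr (by linarith)
      have e : (c • gvec n q p) * (c' • gvec n s r) - (c' • gvec n s r) * (c • gvec n q p)
          = (c * c') • (gvec n q p * gvec n s r - gvec n s r * gvec n q p) := by
        simp only [smul_mul_assoc, mul_smul_comm, smul_smul, smul_sub]
        rw [mul_comm c' c]
      rw [e]
      exact Submodule.smul_mem _ _ key
    | zero => simp
    | add Y Z _ _ h1 h2 =>
      have := Submodule.add_mem _ h1 h2
      convert this using 1
      rw [mul_add, add_mul]; abel
    | smul c Y _ h1 =>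
      have := Submodule.smul_mem _ c h1
      convert this using 1
      rw [mul_smul_comm, smul_mul_assoc, smul_sub]
  | zero => simp
  | add X Z _ _ h1 h2 =>
    have := Submodule.add_mem _ h1 h2
    convert this using 1
    rw [mul_add, add_mul]; abel
  | smul c X _ h1 =>
    have := Submodule.smul_mem _ c h1
    convert this using 1
    rw [mul_smul_comm, smul_mul_assoc, smul_sub]
end

section
/- Let d ∈ ℝ^{Φ⁺} satisfy every defining inequality of K_{2n} strictly, and let e_1,…,e_{2n} be the standard basis of ℂ^{2n}. Fix integers 1 ≤ x < y ≤ 2n. Then for every m ≥ 1 and every sequence of positive roots β_1,…,β_m ∈ Φ⁺ such that the matrix product f_{β_1}·f_{β_2}⋯f_{β_m} applied to the vector e_x equals e_y or −e_y, one has d(β_1) + … + d(β_m) ≥ d(r(x,y)), with equality if and only if m = 1 and β_1 = r(x,y). (That is, the degree function has a unique minimum on the set of monomials in the root vectors sending e_x to ±e_y, attained at the single root vector f_{r(x,y)}.) -/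
/-- The positive root `r(x,y)` attached to `1 ≤ x < y ≤ 2n` (identifying
`1 < ⋯ < n < n̄ < ⋯ < 1̄` with `{1, …, 2n}` via `ī = 2n+1-i`):
`r(x,y) = α_{x,y-1}` if `y ≤ n`; `r(x,y) = α_{x,(2n+1-y)̄}` if `x ≤ n < y ≤ 2n+1-x`;
`r(x,y) = α_{2n+1-y,x̄}` if `x ≤ n` and `y > 2n+1-x`; `r(x,y) = α_{2n+1-y,2n-x}` if `n < x`. -/
def rIdxXY (n x y : ℕ) : ℕ × ℕ × Bool :=
  if y ≤ n then (x, y - 1, false)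
  else if x ≤ n then
    if y ≤ 2*n + 1 - x then rIdx n x (2*n + 1 - y) true
    else rIdx n (2*n + 1 - y) x true
  else (2*n + 1 - y, 2*n - x, false)

/-- Strict Monge condition on unit cells gives the strict Monge condition on all rectangles. -/
theorem monge_aux1 (N : ℕ) (G : ℕ → ℕ → ℝ)
    (h : ∀ x y, 1 ≤ x → x + 1 ≤ y → y + 1 ≤ N → G x (y+1) + G (x+1) y < G x y + G (x+1) (y+1))
    (x y k : ℕ) (hx : 1 ≤ x) (hxy : x + 1 ≤ y) (hk : y + k + 1 ≤ N) :
    G x (y+k+1) + G (x+1) y < G x y + G (x+1) (y+k+1) := by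
  induction k with
  | zero => exact h x y hx hxy hk
  | succ k ih =>
    have h1 := ih (by omega)
    have h2 := h x (y+k+1) hx (by omega) (by omega)
    have e : y + (k+1) + 1 = y + k + 1 + 1 := by omega
    rw [e]; linarith

theorem monge_aux2 (N : ℕ) (G : ℕ → ℕ → ℝ)
    (h : ∀ x y, 1 ≤ x → x + 1 ≤ y → y + 1 ≤ N → G x (y+1) + G (x+1) y < G x y + G (x+1) (y+1))
    (x y k l : ℕ) (hx : 1 ≤ x) (hxy : x + l + 1 ≤ y) (hk : y + k + 1 ≤ N) :
    G x (y+k+1) + G (x+l+1) y < G x y + G (x+l+1) (y+k+1) := by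
  induction l with
  | zero => exact monge_aux1 N G h x y k hx hxy hk
  | succ l ih =>
    have h1 := ih (by omega)
    have h2 := monge_aux1 N G h (x+l+1) y k (by omega) (by omega) hk
    have e : x + (l+1) + 1 = x + l + 1 + 1 := by omega
    rw [e]; linarith

/-- Degree of the root attached to `x < y`, extended by zero to the diagonal. -/
noncomputable def Gdeg {n : ℕ} (d : SpRoot n → ℝ) (x y : ℕ) : ℝ :=
  if x = y then 0 else dval d (rIdxXY n x y)

theorem rIdxXY_symm (n x y : ℕ) (hx : 1 ≤ x) (hxy : x < y) (hy : y ≤ 2*n) :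
    rIdxXY n (2*n+1-y) (2*n+1-x) = rIdxXY n x y := by
  obtain ⟨u, hu⟩ : ∃ u, u = 2*n+1-y := ⟨_, rfl⟩
  obtain ⟨v, hv⟩ : ∃ v, v = 2*n+1-x := ⟨_, rfl⟩
  rw [← hu, ← hv]
  unfold rIdxXY rIdx
  simp only [true_and]
  split_ifs <;> first
    | (exfalso; omega)
    | (simp only [Prod.mk.injEq, and_true]; omega)
    | (simp only [Prod.mk.injEq, and_true]; constructor <;> omega)

theorem Gdeg_symm {n : ℕ} (d : SpRoot n → ℝ) (x y : ℕ) (hx : 1 ≤ x) (hxy : x ≤ y) (hy : y ≤ 2*n) :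
    Gdeg d (2*n+1-y) (2*n+1-x) = Gdeg d x y := by
  unfold Gdeg
  by_cases e : x = y
  · subst e; simp
  · rw [if_neg (by omega), if_neg e, rIdxXY_symm n x y hx (by omega) hy]

theorem Gdeg_A {n : ℕ} (d : SpRoot n → ℝ) (x j : ℕ) (hx : 1 ≤ x) (hxy : x ≤ j) (hy : j ≤ n) :
    Gdeg d x (j+1) = dA d x j := by
  unfold Gdeg dA
  rw [if_neg (by omega)]
  congr 1
  unfold rIdxXY rIdx
  simp only [true_and]
  split_ifs <;> first
    | (exfalso; omega)
    | (simp only [Prod.mk.injEq, and_true, true_and]; omega)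

theorem Gdeg_B {n : ℕ} (d : SpRoot n → ℝ) (x y j : ℕ) (hx : 1 ≤ x) (hxy : x ≤ j) (hy : j ≤ n)
    (hj : y + j = 2*n+1) :
    Gdeg d x y = dB d x j := by
  unfold Gdeg dB
  rw [if_neg (by omega)]
  congr 1
  have e : 2*n+1-y = j := by omega
  unfold rIdxXY
  rw [if_neg (by omega), if_pos (by omega), if_pos (by omega), e]

theorem Gdeg_cell_low {n : ℕ} (d : SpRoot n → ℝ) (hd : d ∈ KconeStrict n) (x y : ℕ)
    (hx : 1 ≤ x) (hxy : x + 1 ≤ y) (hy : x + y + 1 ≤ 2*n+1) :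
    Gdeg d x (y+1) + Gdeg d (x+1) y < Gdeg d x y + Gdeg d (x+1) (y+1) := by
  by_cases hyn : y ≤ n
  · obtain ⟨j, rfl⟩ : ∃ j, y = j + 1 := ⟨y-1, by omega⟩
    by_cases e : x = j
    · subst e
      have h := hd (FacetKind.A, x, x+1) (Or.inl ⟨rfl, hx, hyn, rfl⟩)
      simp only [facetLhs, facetRhs] at h
      rw [Gdeg_A d x (x+1) hx (by omega) hyn, Gdeg_A d x x hx le_rfl (by omega),
        Gdeg_A d (x+1) (x+1) (by omega) le_rfl hyn]
      simp only [Gdeg, if_true]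
      linarith
    · have h := hd (FacetKind.B, x, j) (Or.inr (Or.inl ⟨rfl, hx, by simp only; omega, hyn⟩))
      simp only [facetLhs, facetRhs] at h
      rw [Gdeg_A d x (j+1) hx (by omega) hyn, Gdeg_A d x j hx (by omega) (by omega),
        Gdeg_A d (x+1) (j+1) (by omega) (by omega) hyn,
        Gdeg_A d (x+1) j (by omega) (by omega) (by omega)]
      linarith
  · obtain ⟨j, hj⟩ : ∃ j, y + (j+1) = 2*n+1 := ⟨2*n-y, by omega⟩
    by_cases e : x = j
    · subst e
      have h := hd (FacetKind.D, x, x+1)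
        (Or.inr (Or.inr (Or.inr ⟨rfl, hx, by simp only; omega, rfl⟩)))
      simp only [facetLhs, facetRhs] at h
      have hs := Gdeg_symm d x y hx (by omega) (by omega)
      rw [show 2*n+1-y = x+1 by omega, show 2*n+1-x = y+1 by omega] at hs
      rw [hs, Gdeg_B d x (y+1) x hx le_rfl (by omega) (by omega),
        Gdeg_B d x y (x+1) hx (by omega) (by omega) (by omega),
        Gdeg_B d (x+1) y (x+1) (by omega) (by omega) (by omega) (by omega)]
      linarith
    · have h := hd (FacetKind.C, x, j)
        (Or.inr (Or.inr (Or.inl ⟨rfl, hx, by simp only; omega, by simp only; omega⟩)))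
      simp only [facetLhs, facetRhs] at h
      rw [Gdeg_B d x (y+1) j hx (by omega) (by omega) (by omega),
        Gdeg_B d x y (j+1) hx (by omega) (by omega) (by omega),
        Gdeg_B d (x+1) y (j+1) (by omega) (by omega) (by omega) (by omega),
        Gdeg_B d (x+1) (y+1) j (by omega) (by omega) (by omega) (by omega)]
      linarith

theorem Gdeg_cell {n : ℕ} (d : SpRoot n → ℝ) (hd : d ∈ KconeStrict n) (x y : ℕ)
    (hx : 1 ≤ x) (hxy : x + 1 ≤ y) (hy : y + 1 ≤ 2*n) :
    Gdeg d x (y+1) + Gdeg d (x+1) y < Gdeg d x y + Gdeg d (x+1) (y+1) := by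
  by_cases hl : x + y + 1 ≤ 2*n+1
  · exact Gdeg_cell_low d hd x y hx hxy hl
  · have h := Gdeg_cell_low d hd (2*n-y) (2*n-x) (by omega) (by omega) (by omega)
    rw [← Gdeg_symm d x (y+1) hx (by omega) (by omega),
      ← Gdeg_symm d (x+1) y (by omega) (by omega) (by omega),
      ← Gdeg_symm d x y (by omega) (by omega) (by omega),
      ← Gdeg_symm d (x+1) (y+1) (by omega) (by omega) (by omega),
      show 2*n+1-(y+1) = 2*n-y by omega, show 2*n+1-(x+1) = 2*n-x by omega,
      show 2*n+1-y = 2*n-y+1 by omega, show 2*n+1-x = 2*n-x+1 by omega]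
    linarith

theorem triangle {n : ℕ} (d : SpRoot n → ℝ) (hd : d ∈ KconeStrict n) (x y z : ℕ)
    (hx : 1 ≤ x) (hxy : x < y) (hyz : y < z) (hz : z ≤ 2*n) :
    dval d (rIdxXY n x z) < dval d (rIdxXY n x y) + dval d (rIdxXY n y z) := by
  have h := monge_aux2 (2*n) (Gdeg d) (fun x y => Gdeg_cell d hd x y) x y (z-y-1) (y-x-1) hx
    (by omega) (by omega)
  rw [show y + (z-y-1) + 1 = z by omega, show x + (y-x-1)+1 = y by omega] at h
  unfold Gdeg at h
  rw [if_neg (by omega), if_pos rfl, if_neg (by omega), if_neg (by omega)] at h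
  linarith

theorem Emat_mulVec (n p q x : ℕ) (hx : 1 ≤ x) (hx2 : x ≤ 2*n) :
    (Emat n p q).mulVec (evec n x) = if q = x then evec n p else 0 := by
  funext a
  have key : (Emat n p q).mulVec (evec n x) a = Emat n p q a ⟨x-1, by omega⟩ := by
    unfold Matrix.mulVec dotProduct
    rw [Finset.sum_eq_single ⟨x-1, by omega⟩]
    · simp only [evec]; rw [if_pos (by omega), mul_one]
    · intro b _ hb
      simp only [evec]
      rw [if_neg, mul_zero]
      intro hh
      apply hb
      ext; simp only; omega
    · simp
  rw [key]
  simp only [Emat, Matrix.of_apply]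
  have e : x - 1 + 1 = x := by omega
  rw [e]
  by_cases hq : q = x
  · subst hq; simp [evec]
  · have : ¬ x = q := fun h => hq h.symm
    simp [hq, this]

theorem fvec_act (n : ℕ) (t : ℕ × ℕ × Bool) (ht : IsSpRootIdx n t) (x : ℕ)
    (hx : 1 ≤ x) (hx2 : x ≤ 2*n) :
    (fvec n t).mulVec (evec n x) = 0 ∨ ∃ y, x < y ∧ y ≤ 2*n ∧ t = rIdxXY n x y ∧
      ((fvec n t).mulVec (evec n x) = evec n y ∨ (fvec n t).mulVec (evec n x) = -evec n y) := by
  obtain ⟨i, j, b⟩ := t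
  obtain ⟨h1, h2, h3, h4⟩ := ht
  simp only at h1 h2 h3 h4
  have main : ∀ p q, q = x → x < p → p ≤ 2*n → (i, j, b) = rIdxXY n q p →
     ((fvec n (i,j,b)).mulVec (evec n x) = evec n p ∨
        (fvec n (i,j,b)).mulVec (evec n x) = -evec n p) →
      ∃ y, x < y ∧ y ≤ 2*n ∧ (i,j,b) = rIdxXY n x y ∧
      ((fvec n (i,j,b)).mulVec (evec n x) = evec n y ∨
        (fvec n (i,j,b)).mulVec (evec n x) = -evec n y) := by
    intro p q hq h1 h2 h3 h4
    subst hq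
    exact ⟨p, h1, h2, h3, h4⟩
  have rr : ∀ p q, 1 ≤ q → q < p → p ≤ 2*n →
     ((b = false ∧ ((p = j+1 ∧ q = i ∧ j < n) ∨ (p + i = 2*n+1 ∧ q + j = 2*n ∧ j < n) ∨
        (j = n ∧ p = n+1 ∧ q = i) ∨ (j = n ∧ p + i = 2*n+1 ∧ q = n))) ∨
      (b = true ∧ ((p + j = 2*n+1 ∧ q = i) ∨ (p + i = 2*n+1 ∧ q = j)))) →
      (i, j, b) = rIdxXY n q p := by
    intro p q a1 a2 a3 hh
    cases b <;> simp at hh h4 <;> unfold rIdxXY rIdx <;> simp only [true_and] <;>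
      split_ifs <;> first
        | (exfalso; omega)
        | (simp only [Prod.mk.injEq, and_true]; omega)
  cases b
  · by_cases hj : j < n
    · by_cases c1 : i = x
      · right
        refine main (j+1) i c1 (by omega) (by omega) (rr _ _ (by omega) (by omega) (by omega) (by simp [hj])) ?_
        simp only [fvec, if_pos hj, Matrix.sub_mulVec, Emat_mulVec n _ _ x hx hx2]
        rw [if_pos c1, if_neg (by omega)]; simp
      · by_cases c2 : 2*n+1-(j+1) = x
        · right
          refine main (2*n+1-i) _ c2 (by omega) (by omega) (rr _ _ (by omega) (by omega) (by omega) (by simp [hj]; omega)) ?_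
          simp only [fvec, if_pos hj, Matrix.sub_mulVec, Emat_mulVec n _ _ x hx hx2]
          rw [if_neg c1, if_pos c2]; simp
        · left
          simp only [fvec, if_pos hj, Matrix.sub_mulVec, Emat_mulVec n _ _ x hx hx2]
          rw [if_neg c1, if_neg c2]; simp
    · have hjn : j = n := by omega
      by_cases hi : i < n
      · by_cases c1 : i = x
        · right
          refine main (n+1) i c1 (by omega) (by omega) (rr _ _ (by omega) (by omega) (by omega) (by simp [hjn])) ?_
          simp only [fvec, if_neg hj, if_pos hi, Matrix.add_mulVec, Emat_mulVec n _ _ x hx hx2]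
          rw [if_pos c1, if_neg (by omega)]; simp
        · by_cases c2 : n = x
          · right
            refine main (2*n+1-i) _ c2 (by omega) (by omega) (rr _ _ (by omega) (by omega) (by omega) (by simp [hjn]; omega)) ?_
            simp only [fvec, if_neg hj, if_pos hi, Matrix.add_mulVec, Emat_mulVec n _ _ x hx hx2]
            rw [if_neg c1, if_pos c2]; simp
          · left
            simp only [fvec, if_neg hj, if_pos hi, Matrix.add_mulVec, Emat_mulVec n _ _ x hx hx2]
            rw [if_neg c1, if_neg c2]; simp
      · by_cases c2 : n = x
        · right
          refine main (n+1) _ c2 (by omega) (by omega) (rr _ _ (by omega) (by omega) (by omega) (by simp [hjn]; omega)) ?_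
          simp only [fvec, if_neg hj, if_neg hi, Emat_mulVec n _ _ x hx hx2]
          rw [if_pos c2]; simp
        · left
          simp only [fvec, if_neg hj, if_neg hi, Emat_mulVec n _ _ x hx hx2]
          rw [if_neg c2]
  · simp at h4
    by_cases hij : i = j
    · by_cases c1 : i = x
      · right
        refine main (2*n+1-i) i c1 (by omega) (by omega) (rr _ _ (by omega) (by omega) (by omega) (by simp; omega)) ?_
        simp only [fvec, if_pos hij, Emat_mulVec n _ _ x hx hx2]
        rw [if_pos c1]; simp
      · left
        simp only [fvec, if_pos hij, Emat_mulVec n _ _ x hx hx2]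
        rw [if_neg c1]
    · by_cases c1 : i = x
      · right
        refine main (2*n+1-j) i c1 (by omega) (by omega) (rr _ _ (by omega) (by omega) (by omega) (by simp; omega)) ?_
        simp only [fvec, if_neg hij, Matrix.add_mulVec, Emat_mulVec n _ _ x hx hx2]
        rw [if_pos c1, if_neg (by omega)]; simp
      · by_cases c2 : j = x
        · right
          refine main (2*n+1-i) j c2 (by omega) (by omega) (rr _ _ (by omega) (by omega) (by omega) (by simp; omega)) ?_
          simp only [fvec, if_neg hij, Matrix.add_mulVec, Emat_mulVec n _ _ x hx hx2]
          rw [if_neg c1, if_pos c2]; simp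
        · left
          simp only [fvec, if_neg hij, Matrix.add_mulVec, Emat_mulVec n _ _ x hx hx2]
          rw [if_neg c1, if_neg c2]; simp

theorem d_eq_dval {n : ℕ} (d : SpRoot n → ℝ) (b : SpRoot n) : d b = dval d b.val := by
  unfold dval
  rw [dif_pos b.property]
  rfl

theorem path {n : ℕ} (d : SpRoot n → ℝ) (hd : d ∈ KconeStrict n) (x : ℕ)
    (hx : 1 ≤ x) (hx2 : x ≤ 2*n) (L : List (SpRoot n)) :
    (L.map fun b => fvec n b.val).prod.mulVec (evec n x) = 0 ∨
    ∃ y, y ≤ 2*n ∧ ((L.map fun b => fvec n b.val).prod.mulVec (evec n x) = evec n y ∨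
      (L.map fun b => fvec n b.val).prod.mulVec (evec n x) = -evec n y) ∧
      ((L = [] ∧ y = x) ∨ (x < y ∧ ((L.length = 1 ∧ ∀ b ∈ L, b.val = rIdxXY n x y) ∨
        dval d (rIdxXY n x y) < (L.map d).sum))) := by
  induction L with
  | nil => right; exact ⟨x, hx2, by simp, by simp⟩
  | cons a L ih =>
    simp only [List.map_cons, List.prod_cons, ← Matrix.mulVec_mulVec, List.sum_cons]
    rcases ih with h0 | ⟨z, hz, hact, hcase⟩
    · left; rw [h0]; simp
    · have hxz : x ≤ z := by rcases hcase with h | h <;> omega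
      rcases fvec_act n a.val a.property z (by omega) hz with h0 | ⟨y, hzy, hy, hr, hy2⟩
      · left
        rcases hact with h | h <;> rw [h]
        · exact h0
        · rw [Matrix.mulVec_neg, h0, neg_zero]
      · right
        refine ⟨y, hy, ?_, Or.inr ⟨by omega, ?_⟩⟩
        · rcases hact with h | h <;> rcases hy2 with h' | h' <;>
            simp [h, h', Matrix.mulVec_neg]
        · rcases hcase with ⟨h1, h2⟩ | ⟨h1, h2⟩
          · subst h2; left; rw [h1]; simpa using hr
          · right
            have tri := triangle d hd x z y hx h1 hzy hy
            rw [← hr, ← d_eq_dval] at tri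
            have : dval d (rIdxXY n x z) ≤ (L.map d).sum := by
              rcases h2 with ⟨hl, hb⟩ | h2
              · obtain ⟨b, rfl⟩ := List.length_eq_one_iff.mp hl
                have := hb b (by simp)
                simp [d_eq_dval, this]
              · exact h2.le
            linarith

theorem evec_apply (n y : ℕ) (h1 : 1 ≤ y) (hy : y ≤ 2*n) (z : ℕ) :
    evec n z ⟨y-1, by omega⟩ = if y = z then 1 else 0 := by
  simp only [evec]
  rw [show y - 1 + 1 = y by omega]

/-- Let `d` satisfy every defining inequality of `K_{2n}` strictly and let
`1 ≤ x < y ≤ 2n`. For every `m ≥ 1` and every sequence `β₁, …, β_m` of positive roots such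
that `f_{β₁}⋯f_{β_m}·e_x = ±e_y`, one has `d(β₁) + ⋯ + d(β_m) ≥ d(r(x,y))`, with equality if
and only if `m = 1` and `β₁ = r(x,y)`. -/
theorem spFFLV_unique_min_on_M (n : ℕ) (hn : 2 ≤ n)
    (d : SpRoot n → ℝ) (hd : d ∈ KconeStrict n)
    (x y : ℕ) (hx : 1 ≤ x) (hxy : x < y) (hy : y ≤ 2*n)
    (m : ℕ) (hm : 1 ≤ m) (β : Fin m → SpRoot n)
    (hact : (List.ofFn fun r => fvec n (β r).val).prod.mulVec (evec n x) = evec n y ∨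
            (List.ofFn fun r => fvec n (β r).val).prod.mulVec (evec n x) = -(evec n y)) :
    dval d (rIdxXY n x y) ≤ ∑ r, d (β r) ∧
    ((∑ r, d (β r)) = dval d (rIdxXY n x y) ↔
      (m = 1 ∧ ∀ r, (β r).val = rIdxXY n x y)) := by
  have hL : (List.ofFn fun r => fvec n (β r).val) =
      (List.ofFn β).map (fun b => fvec n b.val) := by
    rw [List.map_ofFn]; rfl
  have hS : ((List.ofFn β).map d).sum = ∑ r, d (β r) := by
    rw [List.map_ofFn, List.sum_ofFn]; rfl
  rw [hL] at hact
  have hp := path d hd x hx (by omega) (List.ofFn β)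
  have hz : ∀ z, ((evec n z = evec n y ∨ evec n z = -evec n y) ∨
      (-evec n z = evec n y ∨ -evec n z = -evec n y)) → z = y := by
    intro z h
    by_contra hne
    have hne' : ¬ y = z := fun h => hne h.symm
    have e1 := evec_apply n y (by omega) hy z
    have e2 := evec_apply n y (by omega) hy y
    rw [if_neg hne'] at e1
    rw [if_pos rfl] at e2
    rcases h with (h | h) | (h | h) <;> have := congrFun h ⟨y-1, by omega⟩ <;>
      simp [e1, e2] at this
  have h0 : ¬ ((0 : Fin (2*n) → ℂ) = evec n y ∨ (0 : Fin (2*n) → ℂ) = -evec n y) := by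
    have e2 := evec_apply n y (by omega) hy y
    rw [if_pos rfl] at e2
    rintro (h | h) <;> have := congrFun h ⟨y-1, by omega⟩ <;> simp [e2] at this
  have conv : (m = 1 ∧ ∀ r, (β r).val = rIdxXY n x y) →
      (∑ r, d (β r)) = dval d (rIdxXY n x y) := by
    rintro ⟨rfl, h⟩
    simp [d_eq_dval, h]
  rcases hp with hp | ⟨z, _, hp, hc⟩
  · rw [hp] at hact; exact absurd hact h0
  · have hzy : z = y := by
      apply hz
      rcases hp with hp | hp <;> rw [hp] at hact
      · exact Or.inl hact
      · exact Or.inr hact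
    subst hzy
    rcases hc with ⟨_, h⟩ | ⟨_, ⟨hl, hb⟩ | hlt⟩
    · omega
    · have hh : m = 1 ∧ ∀ r, (β r).val = rIdxXY n x z :=
        ⟨by simpa using hl, fun r => hb _ (by simp [List.mem_ofFn])⟩
      exact ⟨(conv hh).ge, fun _ => hh, conv⟩
    · rw [hS] at hlt
      exact ⟨hlt.le, fun h => absurd h hlt.ne', conv⟩
end
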